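/- (Spectral theorem for the sub-elliptic operator) Let V ∈ S_p with 1 < p < ∞. Then there exist real numbers 0 < λ₁ ≤ λ₂ ≤ λ₃ ≤ ⋯ with λ_k → ∞ as k → ∞, and functions w_k ∈ H₀(Ω) forming an orthonormal basis of L²(Ω), such that a(w_k, v) = λ_k ∫_Ω w_k v dxdy for all v ∈ H₀(Ω) and all k ≥ 1. Moreover the eigenvalues satisfy the min-max characterization λ_k = inf over k-dimensional subspaces E of H₀(Ω) of sup{ a(u,u) : u ∈ E, ‖u‖_{L²(Ω)} = 1 }. -/

import Mathlib

open MeasureTheory Set Filter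

noncomputable section

/-- The open unit square `Ω = (0,1) × (0,1)` in `ℝ²`. -/
def Omega : Set (ℝ × ℝ) := Ioo (0:ℝ) 1 ×ˢ Ioo (0:ℝ) 1

/-- Test functions on a set `s`: smooth with compact support contained in `s`. -/
def IsTestOn (s : Set (ℝ × ℝ)) (φ : ℝ × ℝ → ℝ) : Prop :=
  ContDiff ℝ (⊤ : ℕ∞) φ ∧ HasCompactSupport φ ∧ tsupport φ ⊆ s

/-- Classical partial derivative in the `x`-direction. -/
def pdx (φ : ℝ × ℝ → ℝ) (p : ℝ × ℝ) : ℝ := fderiv ℝ φ p (1, 0)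

/-- Classical partial derivative in the `y`-direction. -/
def pdy (φ : ℝ × ℝ → ℝ) (p : ℝ × ℝ) : ℝ := fderiv ℝ φ p (0, 1)

/-- `g` is a weak `x`-partial derivative of `u` on `s`. -/
def HasWeakDerivXOn (s : Set (ℝ × ℝ)) (u g : ℝ × ℝ → ℝ) : Prop :=
  LocallyIntegrableOn u s volume ∧ LocallyIntegrableOn g s volume ∧
  ∀ φ : ℝ × ℝ → ℝ, IsTestOn s φ →
    ∫ p in s, u p * pdx φ p = - ∫ p in s, g p * φ p

/-- `g` is a weak `y`-partial derivative of `u` on `s`. -/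
def HasWeakDerivYOn (s : Set (ℝ × ℝ)) (u g : ℝ × ℝ → ℝ) : Prop :=
  LocallyIntegrableOn u s volume ∧ LocallyIntegrableOn g s volume ∧
  ∀ φ : ℝ × ℝ → ℝ, IsTestOn s φ →
    ∫ p in s, u p * pdy φ p = - ∫ p in s, g p * φ p

/-- Test functions on `Ω`. -/
def IsTest (φ : ℝ × ℝ → ℝ) : Prop := IsTestOn Omega φ

/-- Membership in the weighted Sobolev space `𝓗¹(Ω)`, with weak derivatives `gx, gy`:
`u ∈ L²(Ω)`, `gx = ∂ₓu`, `gy = ∂_y u` weakly, and `y^α₁ gx, x^α₂ gy ∈ L²(Ω)`. -/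
structure MemH1 (α₁ α₂ : ℝ) (u gx gy : ℝ × ℝ → ℝ) : Prop where
  memL2 : MemLp u 2 (volume.restrict Omega)
  weakX : HasWeakDerivXOn Omega u gx
  weakY : HasWeakDerivYOn Omega u gy
  wgx : MemLp (fun p => p.2 ^ α₁ * gx p) 2 (volume.restrict Omega)
  wgy : MemLp (fun p => p.1 ^ α₂ * gy p) 2 (volume.restrict Omega)

/-- The `𝓗¹(Ω)` norm of `u` (with weak derivatives `gx, gy`). -/
def H1Norm (α₁ α₂ : ℝ) (u gx gy : ℝ × ℝ → ℝ) : ℝ :=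
  Real.sqrt ((∫ p in Omega, (u p) ^ 2) +
    (∫ p in Omega, (p.2 ^ α₁ * gx p) ^ 2) +
    (∫ p in Omega, (p.1 ^ α₂ * gy p) ^ 2))

/-- Membership in `𝓗₀¹(Ω)`: member of `𝓗¹(Ω)` approximable in the `𝓗¹` norm by
test functions. -/
def MemH10 (α₁ α₂ : ℝ) (u gx gy : ℝ × ℝ → ℝ) : Prop :=
  MemH1 α₁ α₂ u gx gy ∧
  ∀ ε : ℝ, 0 < ε → ∃ φ : ℝ × ℝ → ℝ, IsTest φ ∧
    H1Norm α₁ α₂ (fun p => u p - φ p) (fun p => gx p - pdx φ p)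
      (fun p => gy p - pdy φ p) < ε

/-- Membership in `H₀(Ω) = {u ∈ 𝓗₀¹(Ω) : ∫_Ω V u² < ∞}`. -/
def MemH0 (α₁ α₂ : ℝ) (V u gx gy : ℝ × ℝ → ℝ) : Prop :=
  MemH10 α₁ α₂ u gx gy ∧
  IntegrableOn (fun p => V p * (u p) ^ 2) Omega volume

/-- The bilinear form `a(u,v)` associated with the sub-elliptic operator with potential `V`. -/
def aForm (α₁ α₂ : ℝ) (V u gx gy v hx hy : ℝ × ℝ → ℝ) : ℝ :=
  ∫ p in Omega, ((p.2 ^ α₁ * gx p) * (p.2 ^ α₁ * hx p) +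
    (p.1 ^ α₂ * gy p) * (p.1 ^ α₂ * hy p) + V p * u p * v p)

/-- The bilinear form `a₁(u,v)` (no potential). -/
def a1Form (α₁ α₂ : ℝ) (u gx gy v hx hy : ℝ × ℝ → ℝ) : ℝ :=
  ∫ p in Omega, ((p.2 ^ α₁ * gx p) * (p.2 ^ α₁ * hx p) +
    (p.1 ^ α₂ * gy p) * (p.1 ^ α₂ * hy p))

/-- Membership in `S_p = {V ∈ L^p(Ω) : V ≥ 0 a.e., ‖V‖_{L^p(Ω)} ≤ M}`. -/
def MemSp (ppow M : ℝ) (V : ℝ × ℝ → ℝ) : Prop :=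
  MemLp V (ENNReal.ofReal ppow) (volume.restrict Omega) ∧
  (∀ᵐ p ∂(volume.restrict Omega), 0 ≤ V p) ∧
  eLpNorm V (ENNReal.ofReal ppow) (volume.restrict Omega) ≤ ENNReal.ofReal M

/-- `u` (with weak derivatives `gx, gy`) is an eigenfunction of the sub-elliptic operator
with potential `V` for the eigenvalue `lam`. -/
def IsEigenfun (α₁ α₂ : ℝ) (V : ℝ × ℝ → ℝ) (lam : ℝ) (u gx gy : ℝ × ℝ → ℝ) : Prop :=
  MemH0 α₁ α₂ V u gx gy ∧
  ∀ v hx hy : ℝ × ℝ → ℝ, MemH0 α₁ α₂ V v hx hy →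
    aForm α₁ α₂ V u gx gy v hx hy = lam * ∫ p in Omega, u p * v p

/-- The first eigenvalue `λ₁(V) = inf { a(u,u) : u ∈ H₀(Ω), ‖u‖_{L²} = 1 }`. -/
def lam1 (α₁ α₂ : ℝ) (V : ℝ × ℝ → ℝ) : ℝ :=
  sInf { r | ∃ u gx gy : ℝ × ℝ → ℝ, MemH0 α₁ α₂ V u gx gy ∧
    (∫ p in Omega, (u p) ^ 2) = 1 ∧ r = aForm α₁ α₂ V u gx gy u gx gy }

/-- `sup { a(u,u) : u ∈ span(φ), ‖u‖_{L²(Ω)} = 1 }` for a finite family `φ` with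
weak derivatives `φx, φy`. -/
def rayleighSup (α₁ α₂ : ℝ) (V : ℝ × ℝ → ℝ) {k : ℕ} (φ φx φy : Fin k → ℝ × ℝ → ℝ) : ℝ :=
  sSup { s | ∃ c : Fin k → ℝ,
    (∫ p in Omega, (∑ i, c i * φ i p) ^ 2) = 1 ∧
    s = aForm α₁ α₂ V (fun p => ∑ i, c i * φ i p) (fun p => ∑ i, c i * φx i p)
      (fun p => ∑ i, c i * φy i p) (fun p => ∑ i, c i * φ i p)
      (fun p => ∑ i, c i * φx i p) (fun p => ∑ i, c i * φy i p) }

/-- The set of values `sup { a(u,u) : u ∈ E, ‖u‖ = 1 }` over `k`-dimensional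
subspaces `E` of `H₀(Ω)` (represented by `L²(Ω)`-linearly independent families of
`k` elements of `H₀(Ω)`). -/
def minmaxSet (α₁ α₂ : ℝ) (V : ℝ × ℝ → ℝ) (k : ℕ) : Set ℝ :=
  { r | ∃ φ φx φy : Fin k → ℝ × ℝ → ℝ,
      (∀ i, MemH0 α₁ α₂ V (φ i) (φx i) (φy i)) ∧
      (∀ c : Fin k → ℝ, (∀ᵐ p ∂(volume.restrict Omega), ∑ i, c i * φ i p = 0) → c = 0) ∧
      r = rayleighSup α₁ α₂ V φ φx φy }

/-- The `k`-th eigenvalue via the min-max principle. -/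
def lamk (α₁ α₂ : ℝ) (V : ℝ × ℝ → ℝ) (k : ℕ) : ℝ := sInf (minmaxSet α₁ α₂ V k)

/-- Membership in `U = (𝓗₀¹(Ω) ∩ L^{2q}(Ω)) \ {0}`. -/
def MemU (α₁ α₂ qe : ℝ) (u gx gy : ℝ × ℝ → ℝ) : Prop :=
  MemH10 α₁ α₂ u gx gy ∧
  MemLp u (ENNReal.ofReal (2 * qe)) (volume.restrict Omega) ∧
  ¬ (∀ᵐ p ∂(volume.restrict Omega), u p = 0)

/-- The functional `J(u) = (a₁(u,u) + M ‖u‖_{L^{2q}(Ω)}²) / ‖u‖_{L²(Ω)}²`. -/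
def Jfun (α₁ α₂ M qe : ℝ) (u gx gy : ℝ × ℝ → ℝ) : ℝ :=
  (a1Form α₁ α₂ u gx gy u gx gy +
    M * (∫ p in Omega, |u p| ^ (2 * qe)) ^ (1 / qe)) / (∫ p in Omega, (u p) ^ 2)

section
open scoped InnerProductSpace Topology

theorem abs_compact {H L : Type*} [NormedAddCommGroup H] [InnerProductSpace ℝ H] [CompleteSpace H]
    [NormedAddCommGroup L] [InnerProductSpace ℝ L] [CompleteSpace L] (J : H →L[ℝ] L)
    (hkey : ∀ ε > 0, ∃ (m : ℕ) (g : Fin m → L), ∀ v : H,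
      ‖J v‖ ^ 2 ≤ ε * ‖v‖ ^ 2 + ∑ j, ⟪g j, J v⟫_ℝ ^ 2) : IsCompactOperator J := by
  have h0 : TotallyBounded (J '' Metric.ball 0 1) := by
    rw [Metric.totallyBounded_iff]
    intro ε hε
    obtain ⟨m, g, hg⟩ := hkey (ε ^ 2 / 16) (by positivity)
    let G : H →L[ℝ] EuclideanSpace ℝ (Fin m) :=
      (EuclideanSpace.equiv (Fin m) ℝ).symm.toContinuousLinearMap ∘L
        (ContinuousLinearMap.pi fun j => (innerSL ℝ (g j)) ∘L J)
    have hGn : ∀ v, ‖G v‖ ^ 2 = ∑ j, ⟪g j, J v⟫_ℝ ^ 2 := by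
      intro v
      rw [EuclideanSpace.norm_sq_eq]
      simp [G]
    have hGb : TotallyBounded (G '' Metric.ball 0 1) := by
      have hb : Bornology.IsBounded (G '' Metric.ball 0 1) :=
        G.lipschitz.isBounded_image Metric.isBounded_ball
      exact hb.isCompact_closure.totallyBounded.subset subset_closure
    obtain ⟨t, hts, htf, ht⟩ := Metric.finite_approx_of_totallyBounded hGb (ε / 2) (by positivity)
    have hts' : ∀ y ∈ t, ∃ x : H, x ∈ Metric.ball (0 : H) 1 ∧ G x = y := fun y hy => hts hy
    choose! f hf using hts'
    refine ⟨(fun y => J (f y)) '' t, htf.image _, ?_⟩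
    rintro _ ⟨v, hv, rfl⟩
    have := ht (mem_image_of_mem G hv)
    simp only [mem_iUnion, exists_prop] at this
    obtain ⟨y, hy, hvy⟩ := this
    simp only [mem_iUnion, exists_prop, mem_image, exists_exists_and_eq_and]
    refine ⟨y, hy, ?_⟩
    obtain ⟨h1, h2⟩ := hf y hy
    rw [Metric.mem_ball, dist_eq_norm] at *
    have h3 := hg (v - f y)
    rw [← hGn, map_sub, map_sub, h2] at h3
    have h4 : ‖v - f y‖ < 2 := by
      have := norm_sub_le v (f y)
      simp only [sub_zero] at h1 hv
      linarith
    have h5 : ‖v - f y‖ ^ 2 ≤ 4 := by nlinarith [norm_nonneg (v - f y)]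
    have h6 : ‖G v - y‖ ^ 2 < ε ^ 2 / 4 := by nlinarith [norm_nonneg (G v - y)]
    apply lt_of_pow_lt_pow_left₀ 2 hε.le
    nlinarith [sq_nonneg ε]
  refine (isCompactOperator_iff_isCompact_closure_image_ball (J : H →ₗ[ℝ] L) one_pos).2 ?_
  exact isCompact_iff_totallyBounded_isComplete.2 ⟨h0.closure, isClosed_closure.isComplete⟩

theorem abs_max {H L : Type*} [NormedAddCommGroup H] [InnerProductSpace ℝ H] [CompleteSpace H]
    [NormedAddCommGroup L] [InnerProductSpace ℝ L] [CompleteSpace L] (J : H →L[ℝ] L)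
    (hJ : IsCompactOperator J) (hne : J ≠ 0) :
    0 < ‖J‖ ∧ ∃ v : H, ‖v‖ = 1 ∧ ∀ x, ⟪J v, J x⟫_ℝ = ‖J‖ ^ 2 * ⟪v, x⟫_ℝ := by
  have hpos : 0 < ‖J‖ := norm_pos_iff.2 hne
  -- maximizing sequence
  have hseq : ∀ n : ℕ, ∃ v : H, ‖v‖ = 1 ∧ ‖J‖ - ‖J‖ / (n + 1) < ‖J v‖ := by
    intro n
    have hlt : ‖J‖ - ‖J‖ / (n + 1) < ‖J‖ := by
      have : 0 < ‖J‖ / (n + 1) := by positivity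
      linarith
    have hge : 0 ≤ ‖J‖ - ‖J‖ / (n + 1) := by
      have : ‖J‖ / (n + 1) ≤ ‖J‖ := div_le_self hpos.le (by linarith [n.cast_nonneg (α := ℝ)])
      linarith
    by_contra hcon
    push Not at hcon
    have : ‖J‖ ≤ ‖J‖ - ‖J‖ / (n + 1) := by
      apply J.opNorm_le_bound hge
      intro x
      by_cases hx : x = 0
      · simp [hx]
      have hx' : 0 < ‖x‖ := norm_pos_iff.2 hx
      have := hcon (‖x‖⁻¹ • x) (by rw [norm_smul]; simp [hx])
      rw [map_smul, norm_smul, norm_inv, norm_norm, inv_mul_le_iff₀ hx'] at this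
      linarith
    linarith
  choose v hv1 hv2 using hseq
  have hlim : Tendsto (fun n => ‖J (v n)‖) atTop (𝓝 ‖J‖) := by
    have h1 : Tendsto (fun n : ℕ => ‖J‖ - ‖J‖ / ((n : ℝ) + 1)) atTop (𝓝 ‖J‖) := by
      have := (tendsto_one_div_add_atTop_nhds_zero_nat (𝕜 := ℝ)).const_mul ‖J‖
      simpa [div_eq_mul_inv] using this.const_sub ‖J‖
    refine tendsto_of_tendsto_of_tendsto_of_le_of_le h1 tendsto_const_nhds (fun n => (hv2 n).le) ?_
    intro n
    simpa [hv1 n] using J.le_opNorm (v n)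
  let A := ContinuousLinearMap.adjoint J
  have hA : ‖A‖ = ‖J‖ := by
    simp [A]
  have hdist : Tendsto (fun n => A (J (v n)) - (‖J‖ ^ 2) • v n) atTop (𝓝 0) := by
    rw [tendsto_zero_iff_norm_tendsto_zero]
    have hb : ∀ n, ‖A (J (v n)) - (‖J‖ ^ 2) • v n‖ ^ 2 ≤ ‖J‖ ^ 4 - ‖J‖ ^ 2 * ‖J (v n)‖ ^ 2 := by
      intro n
      have e : ‖A (J (v n)) - (‖J‖ ^ 2) • v n‖ ^ 2 =
          ‖A (J (v n))‖ ^ 2 - 2 * ‖J‖ ^ 2 * ‖J (v n)‖ ^ 2 + ‖J‖ ^ 4 := by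
        rw [@norm_sub_sq_real, inner_smul_right, ContinuousLinearMap.adjoint_inner_left,
          real_inner_self_eq_norm_sq, norm_smul, hv1]
        simp
        ring
      have h1 : ‖A (J (v n))‖ ≤ ‖J‖ * ‖J (v n)‖ := by
        rw [← hA]; exact A.le_opNorm _
      have h2 : ‖A (J (v n))‖ ^ 2 ≤ (‖J‖ * ‖J (v n)‖) ^ 2 := by gcongr
      rw [e]; nlinarith
    have hz : Tendsto (fun n => ‖J‖ ^ 4 - ‖J‖ ^ 2 * ‖J (v n)‖ ^ 2) atTop (𝓝 0) := by
      have := ((hlim.pow 2).const_mul (‖J‖ ^ 2)).const_sub (‖J‖ ^ 4)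
      convert this using 2
      ring
    have h3 := squeeze_zero (fun n => sq_nonneg _) hb hz
    have h4 := h3.sqrt
    simpa [Real.sqrt_sq] using h4
  have hcpt := hJ.isCompact_closure_image_closedBall 1
  obtain ⟨y, -, ψ, hψ, hy⟩ := hcpt.tendsto_subseq (x := fun n => J (v n))
    (fun n => subset_closure ⟨v n, by simp [hv1 n], rfl⟩)
  have hAy : Tendsto (fun n => A (J (v (ψ n)))) atTop (𝓝 (A y)) := (A.continuous.tendsto y).comp hy
  have hvlim : Tendsto (fun n => v (ψ n)) atTop (𝓝 ((‖J‖ ^ 2)⁻¹ • A y)) := by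
    have := (hAy.sub (hdist.comp hψ.tendsto_atTop)).const_smul (‖J‖ ^ 2)⁻¹
    simp only [Function.comp_def, sub_sub_cancel, sub_zero] at this
    refine this.congr fun n => ?_
    rw [smul_smul, inv_mul_cancel₀ (by positivity), one_smul]
  set z := (‖J‖ ^ 2)⁻¹ • A y
  have hz1 : ‖z‖ = 1 := by
    refine tendsto_nhds_unique hvlim.norm ?_
    simp [hv1]
  have hJz : J z = y := tendsto_nhds_unique ((J.continuous.tendsto z).comp hvlim) hy
  refine ⟨hpos, z, hz1, fun x => ?_⟩
  have : A (J z) = (‖J‖ ^ 2) • z := by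
    rw [hJz]; simp only [z]; rw [smul_smul, mul_inv_cancel₀ (by positivity), one_smul]
  rw [← ContinuousLinearMap.adjoint_inner_left]
  change ⟪A (J z), x⟫_ℝ = _
  rw [this, real_inner_smul_left]

theorem abs_step {H L : Type*} [NormedAddCommGroup H] [InnerProductSpace ℝ H] [CompleteSpace H]
    [NormedAddCommGroup L] [InnerProductSpace ℝ L] [CompleteSpace L] (J : H →L[ℝ] L)
    (hJ : IsCompactOperator J) (hinf : ¬ FiniteDimensional ℝ L)
    (hdense : ∀ f : L, (∀ v, ⟪f, J v⟫_ℝ = 0) → f = 0)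
    (F : Submodule ℝ H) (hF : FiniteDimensional ℝ F) :
    ∃ w ∈ Fᗮ, ∃ m : ℝ, 0 < m ∧ ‖w‖ = 1 ∧ (∀ x ∈ Fᗮ, ⟪J w, J x⟫_ℝ = m * ⟪w, x⟫_ℝ) ∧
      ∀ x ∈ Fᗮ, ‖J x‖ ^ 2 ≤ m * ‖x‖ ^ 2 := by
  let J' : Fᗮ →L[ℝ] L := J ∘L Fᗮ.subtypeL
  have hJ' : IsCompactOperator J' := hJ.comp_clm Fᗮ.subtypeL
  have hne : J' ≠ 0 := by
    intro h0
    apply hinf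
    let R : Submodule ℝ L := F.map (J : H →ₗ[ℝ] L)
    have hR : FiniteDimensional ℝ R := by infer_instance
    have hRb : Rᗮ = ⊥ := by
      rw [Submodule.eq_bot_iff]
      intro f hf
      apply hdense
      intro v
      obtain ⟨a, ha, b, hb, rfl⟩ := F.exists_add_mem_mem_orthogonal v
      have h1 : J b = 0 := by
        have := congrArg (fun T => T ⟨b, hb⟩) h0
        simpa [J'] using this
      rw [map_add, h1, add_zero, real_inner_comm]
      exact (Submodule.mem_orthogonal R f).1 hf _ ⟨a, ha, rfl⟩
    have hRt : R = ⊤ := (Submodule.orthogonal_eq_bot_iff).1 hRb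
    rw [hRt] at hR
    exact Module.finite_def.2 (Module.Finite.iff_fg.1 hR)
  obtain ⟨hpos, v, hv1, hv⟩ := abs_max J' hJ' hne
  refine ⟨v, v.2, ‖J'‖ ^ 2, by positivity, by simpa using hv1, ?_, ?_⟩
  · intro x hx
    exact hv ⟨x, hx⟩
  · intro x hx
    have := J'.le_opNorm ⟨x, hx⟩
    rw [← mul_pow]
    exact pow_le_pow_left₀ (norm_nonneg _) this 2

theorem abs_seq {H L : Type*} [NormedAddCommGroup H] [InnerProductSpace ℝ H] [CompleteSpace H]
    [NormedAddCommGroup L] [InnerProductSpace ℝ L] [CompleteSpace L] (J : H →L[ℝ] L)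
    (hinf : ¬ FiniteDimensional ℝ L)
    (hdense : ∀ f : L, (∀ v, ⟪f, J v⟫_ℝ = 0) → f = 0)
    (hkey : ∀ ε > 0, ∃ (m : ℕ) (g : Fin m → L), ∀ v : H,
      ‖J v‖ ^ 2 ≤ ε * ‖v‖ ^ 2 + ∑ j, ⟪g j, J v⟫_ℝ ^ 2) :
    ∃ (μ : ℕ → ℝ) (w : ℕ → H), (∀ k, 0 < μ k) ∧ Antitone μ ∧ Tendsto μ atTop (𝓝 0) ∧
      (∀ j k, ⟪J (w j), J (w k)⟫_ℝ = if j = k then 1 else 0) ∧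
      (∀ k v, ⟪J (w k), J v⟫_ℝ = μ k * ⟪w k, v⟫_ℝ) ∧
      (∀ f, (∀ k, ⟪f, J (w k)⟫_ℝ = 0) → f = 0) ∧
      (∀ k v, (∀ j < k, ⟪w j, v⟫_ℝ = 0) → ‖J v‖ ^ 2 ≤ μ k * ‖v‖ ^ 2) := by
  have hJ := abs_compact J hkey
  choose! nxt h1 m h2 h3 h4 h5 using abs_step J hJ hinf hdense
  let S : ℕ → Submodule ℝ H := fun n => Nat.rec (motive := fun _ => Submodule ℝ H) ⊥ (fun _ F => F ⊔ Submodule.span ℝ {nxt F}) n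
  have hS0 : S 0 = ⊥ := rfl
  have hSs : ∀ n, S (n + 1) = S n ⊔ Submodule.span ℝ {nxt (S n)} := fun n => rfl
  have hfin : ∀ n, FiniteDimensional ℝ ↥(S n) := by
    intro n
    induction n with
    | zero => rw [hS0]; infer_instance
    | succ n ih => rw [hSs]; infer_instance
  have hmono : Monotone S := monotone_nat_of_le_succ fun n => by rw [hSs]; exact le_sup_left
  let e : ℕ → H := fun n => nxt (S n)
  let μ : ℕ → ℝ := fun n => m (S n)
  have hμ : ∀ k, 0 < μ k := fun k => h2 _ (hfin k)
  have hmem : ∀ j k, j < k → e j ∈ S k := by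
    intro j k hjk
    apply hmono hjk
    rw [hSs]
    exact Submodule.mem_sup_right (Submodule.mem_span_singleton_self _)
  have horthe : ∀ j k, j < k → ⟪e j, e k⟫_ℝ = 0 := fun j k hjk =>
    (Submodule.mem_orthogonal _ _).1 (h1 _ (hfin k)) _ (hmem j k hjk)
  have hon : Orthonormal ℝ e := by
    refine ⟨fun k => h3 _ (hfin k), fun j k hjk => ?_⟩
    rcases lt_or_gt_of_ne hjk with h | h
    · exact horthe j k h
    · rw [real_inner_comm]; exact horthe k j h
  have hperp : ∀ n v, (∀ j < n, ⟪e j, v⟫_ℝ = 0) → v ∈ (S n)ᗮ := by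
    intro n
    induction n with
    | zero => intro v _; rw [hS0]; simp
    | succ n ih =>
      intro v hv
      rw [hSs, ← Submodule.inf_orthogonal]
      refine ⟨ih v fun j hj => hv j (by omega), ?_⟩
      rw [SetLike.mem_coe, Submodule.mem_orthogonal_singleton_iff_inner_right]
      exact hv n (by omega)
  have hJo : ∀ j k, j < k → ⟪J (e k), J (e j)⟫_ℝ = 0 := by
    intro j k hjk
    have : e k ∈ (S j)ᗮ := Submodule.orthogonal_le (hmono hjk.le) (h1 _ (hfin k))
    rw [real_inner_comm]
    have h := h4 _ (hfin j) _ this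
    change ⟪J (e j), J (e k)⟫_ℝ = m (S j) * ⟪e j, e k⟫_ℝ at h
    rw [h, horthe j k hjk, mul_zero]
  have hSJ : ∀ k n, n ≤ k → ∀ v ∈ S n, ⟪J (e k), J v⟫_ℝ = 0 := by
    intro k n
    induction n with
    | zero => intro _ v hv; rw [hS0, Submodule.mem_bot] at hv; simp [hv]
    | succ n ih =>
      intro hn v hv
      rw [hSs, Submodule.mem_sup] at hv
      obtain ⟨a, ha, b, hb, rfl⟩ := hv
      obtain ⟨c, rfl⟩ := Submodule.mem_span_singleton.1 hb
      rw [map_add, inner_add_right, ih (by omega) a ha, map_smul, inner_smul_right]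
      have := hJo n k (by omega)
      simp only [e] at this ⊢
      rw [this]; simp
  have heig : ∀ k v, ⟪J (e k), J v⟫_ℝ = μ k * ⟪e k, v⟫_ℝ := by
    intro k v
    have := hfin k
    obtain ⟨a, ha, b, hb, rfl⟩ := (S k).exists_add_mem_mem_orthogonal v
    have h6 : ⟪e k, a⟫_ℝ = 0 := by
      rw [real_inner_comm]; exact (Submodule.mem_orthogonal _ _).1 (h1 _ (hfin k)) _ ha
    rw [map_add, inner_add_right, inner_add_right, hSJ k k le_rfl a ha, h6, zero_add, zero_add]
    exact h4 _ (hfin k) b hb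
  have hbd : ∀ k v, (∀ j < k, ⟪e j, v⟫_ℝ = 0) → ‖J v‖ ^ 2 ≤ μ k * ‖v‖ ^ 2 :=
    fun k v hv => h5 _ (hfin k) v (hperp k v hv)
  have hJe : ∀ k, ‖J (e k)‖ ^ 2 = μ k := by
    intro k
    rw [← real_inner_self_eq_norm_sq, heig, real_inner_self_eq_norm_sq, hon.1 k]; simp
  have hanti : Antitone μ := by
    apply antitone_nat_of_succ_le
    intro n
    rw [← hJe (n + 1)]
    have := hbd n (e (n + 1)) (fun j hj => horthe j (n + 1) (by omega))
    simpa [hon.1 (n + 1)] using this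
  have hlim : Tendsto μ atTop (𝓝 0) := by
    rw [Metric.tendsto_atTop]
    intro ε hε
    obtain ⟨M, g, hg⟩ := hkey (ε / 2) (by positivity)
    let A := ContinuousLinearMap.adjoint J
    have hz : Tendsto (fun k => ∑ j, ⟪g j, J (e k)⟫_ℝ ^ 2) atTop (𝓝 0) := by
      have : Tendsto (fun k => ∑ j : Fin M, ⟪g j, J (e k)⟫_ℝ ^ 2) atTop (𝓝 (∑ j : Fin M, 0)) := by
        apply tendsto_finsetSum
        intro j _
        have hs := hon.inner_products_summable (x := A (g j))
        have := hs.tendsto_atTop_zero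
        refine this.congr fun k => ?_
        rw [real_inner_comm, ContinuousLinearMap.adjoint_inner_left, Real.norm_eq_abs, sq_abs]
      simpa using this
    obtain ⟨N, hN⟩ := (Metric.tendsto_atTop.1 hz) (ε / 2) (by positivity)
    refine ⟨N, fun n hn => ?_⟩
    have h7 := hN n hn
    have h8 := hg (e n)
    rw [hJe, hon.1 n] at h8
    rw [Real.dist_eq, sub_zero] at h7 ⊢
    rw [abs_of_pos (hμ n)]
    have := le_abs_self (∑ j, ⟪g j, J (e n)⟫_ℝ ^ 2)
    linarith
  have hsq : ∀ k, 0 < Real.sqrt (μ k) := fun k => Real.sqrt_pos.2 (hμ k)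
  refine ⟨μ, fun k => (Real.sqrt (μ k))⁻¹ • e k, hμ, hanti, hlim, ?_, ?_, ?_, ?_⟩
  · intro j k
    simp only [map_smul, inner_smul_left, inner_smul_right]
    rw [heig]
    split_ifs with h
    · subst h
      rw [real_inner_self_eq_norm_sq, hon.1]
      have h9 := Real.mul_self_sqrt (hμ j).le
      have := (hsq j).ne'
      simp only [conj_trivial, one_pow, mul_one]
      field_simp
      rw [pow_two]; exact h9.symm
    · rw [hon.2 h]; simp
  · intro k v
    simp only [map_smul, inner_smul_left]
    rw [heig]; ring
  · intro f hf
    let A := ContinuousLinearMap.adjoint J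
    have hv : ∀ k, ⟪e k, A f⟫_ℝ = 0 := by
      intro k
      have := hf k
      rw [map_smul, inner_smul_right] at this
      rw [real_inner_comm, ContinuousLinearMap.adjoint_inner_left]
      exact (mul_eq_zero.1 this).resolve_left (inv_ne_zero (hsq k).ne')
    have hJ0 : J (A f) = 0 := by
      have h10 : ‖J (A f)‖ ^ 2 ≤ 0 := by
        have : Tendsto (fun k => μ k * ‖A f‖ ^ 2) atTop (𝓝 0) := by
          simpa using hlim.mul_const (‖A f‖ ^ 2)
        exact ge_of_tendsto' this fun k => hbd k _ fun j _ => hv j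
      have : ‖J (A f)‖ = 0 := by nlinarith [norm_nonneg (J (A f))]
      exact norm_eq_zero.1 this
    have hA0 : A f = 0 := by
      rw [← inner_self_eq_zero (𝕜 := ℝ), ContinuousLinearMap.adjoint_inner_left, hJ0, inner_zero_right]
    apply hdense
    intro v
    rw [← ContinuousLinearMap.adjoint_inner_left]
    change ⟪A f, v⟫_ℝ = 0
    rw [hA0, inner_zero_left]
  · intro k v hv
    apply hbd
    intro j hj
    have := hv j hj
    rw [inner_smul_left] at this
    exact (mul_eq_zero.1 this).resolve_left (by simpa using (hsq j).ne')

theorem abs_minmax {H L : Type*} [NormedAddCommGroup H] [InnerProductSpace ℝ H]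
    [NormedAddCommGroup L] [InnerProductSpace ℝ L] (J : H →L[ℝ] L)
    (μ : ℕ → ℝ) (w : ℕ → H) (hμ : ∀ k, 0 < μ k)
    (hbd : ∀ k v, (∀ j < k, ⟪w j, v⟫_ℝ = 0) → ‖J v‖ ^ 2 ≤ μ k * ‖v‖ ^ 2)
    (k : ℕ) (Φ : Fin (k + 1) → H) (hΦ : ∀ c : Fin (k + 1) → ℝ, J (∑ i, c i • Φ i) = 0 → c = 0) :
    (∃ c : Fin (k + 1) → ℝ, ‖J (∑ i, c i • Φ i)‖ = 1 ∧ (μ k)⁻¹ ≤ ‖∑ i, c i • Φ i‖ ^ 2) ∧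
    ∃ C, ∀ c : Fin (k + 1) → ℝ, ‖J (∑ i, c i • Φ i)‖ = 1 → ‖∑ i, c i • Φ i‖ ^ 2 ≤ C := by
  let T : (Fin (k + 1) → ℝ) →ₗ[ℝ] H := Fintype.linearCombination ℝ Φ
  have hT : ∀ c, T c = ∑ i, c i • Φ i := fun c => Fintype.linearCombination_apply ℝ Φ c
  constructor
  · let P : (Fin (k + 1) → ℝ) →ₗ[ℝ] (Fin k → ℝ) :=
      LinearMap.pi fun j => ((innerSL ℝ (w j)) : H →ₗ[ℝ] ℝ) ∘ₗ T
    have hker : LinearMap.ker P ≠ ⊥ := by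
      apply LinearMap.ker_ne_bot_of_finrank_lt
      simp
    obtain ⟨c, hc, hc0⟩ := Submodule.exists_mem_ne_zero_of_ne_bot hker
    have hJc : J (T c) ≠ 0 := fun h => hc0 (hΦ c (by rw [← hT]; exact h))
    have hn : 0 < ‖J (T c)‖ := norm_pos_iff.2 hJc
    have hb : ‖J (T c)‖ ^ 2 ≤ μ k * ‖T c‖ ^ 2 := by
      apply hbd
      intro j hj
      have := congrFun (LinearMap.mem_ker.1 hc) ⟨j, hj⟩
      simpa [P] using this
    refine ⟨‖J (T c)‖⁻¹ • c, ?_, ?_⟩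
    · rw [← hT, map_smul, map_smul, norm_smul, norm_inv, norm_norm, inv_mul_cancel₀ hn.ne']
    · rw [← hT, map_smul, norm_smul, norm_inv, norm_norm, mul_pow, inv_pow, inv_mul_eq_div,
        inv_le_iff_one_le_mul₀ (hμ k), div_mul_eq_mul_div, one_le_div (by positivity)]
      linarith
  · have hinj : LinearMap.ker ((J : H →ₗ[ℝ] L) ∘ₗ T) = ⊥ := by
      rw [LinearMap.ker_eq_bot']
      intro c hc
      exact hΦ c (by rw [← hT]; exact hc)
    obtain ⟨K, hK, hKa⟩ := LinearMap.exists_antilipschitzWith _ hinj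
    refine ⟨(∑ i, K * ‖Φ i‖) ^ 2, fun c hc => ?_⟩
    have h1 : ‖c‖ ≤ K := by
      have := hKa.le_mul_dist c 0
      rw [map_zero, dist_zero_right, dist_zero_right] at this
      have e : ‖((J : H →ₗ[ℝ] L) ∘ₗ T) c‖ = 1 := by rw [← hc, ← hT]; rfl
      rwa [e, mul_one] at this
    gcongr
    refine (norm_sum_le _ _).trans (Finset.sum_le_sum fun i _ => ?_)
    rw [norm_smul]
    gcongr
    exact (norm_le_pi_norm c i).trans h1

theorem abs_minmax' {H L : Type*} [NormedAddCommGroup H] [InnerProductSpace ℝ H]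
    [NormedAddCommGroup L] [InnerProductSpace ℝ L] (J : H →L[ℝ] L)
    (μ : ℕ → ℝ) (w : ℕ → H) (hμ : ∀ k, 0 < μ k) (hanti : Antitone μ)
    (hon : ∀ j k, ⟪J (w j), J (w k)⟫_ℝ = if j = k then 1 else 0)
    (heig : ∀ k v, ⟪J (w k), J v⟫_ℝ = μ k * ⟪w k, v⟫_ℝ) (k : ℕ) (c : Fin (k + 1) → ℝ) :
    ‖J (∑ i : Fin (k + 1), c i • w i)‖ ^ 2 = ∑ i, c i ^ 2 ∧ 
     ‖∑ i : Fin (k + 1), c i • w i‖ ^ 2 ≤ (μ k)⁻¹ * ∑ i, c i ^ 2 := by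
  have hw : ∀ i j : ℕ, ⟪w i, w j⟫_ℝ = if i = j then (μ i)⁻¹ else 0 := by
    intro i j
    have h := heig i (w j)
    rw [hon] at h
    have := (hμ i).ne'
    split_ifs at h ⊢ with hij
    · exact eq_inv_of_mul_eq_one_right h.symm
    · exact (mul_eq_zero.1 h.symm).resolve_left this
  constructor
  · rw [← real_inner_self_eq_norm_sq, map_sum]
    simp only [map_smul, sum_inner, inner_sum, inner_smul_left, inner_smul_right, hon]
    simp [Fin.val_inj, pow_two]
  · rw [← real_inner_self_eq_norm_sq, Finset.mul_sum]
    simp only [sum_inner, inner_sum, inner_smul_left, inner_smul_right, hw]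
    simp only [Fin.val_inj, conj_trivial, mul_ite, mul_zero, Finset.sum_ite_eq', Finset.mem_univ, if_true]
    refine Finset.sum_le_sum fun i _ => ?_
    have : (μ i)⁻¹ ≤ (μ k)⁻¹ := inv_anti₀ (hμ k) (hanti (by omega))
    nlinarith [sq_nonneg (c i)]


theorem key_cs {f : ℝ → ℝ} (hf : Continuous f) {a b : ℝ} (hab : a ≤ b) :
    (∫ x in a..b, f x) ^ 2 ≤ (b - a) * ∫ x in a..b, f x ^ 2 := by
  rcases hab.eq_or_lt with rfl | hlt
  · simp
  set m := ∫ x in a..b, f x with hm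
  have hpos : 0 < b - a := sub_pos.2 hlt
  have h0 : 0 ≤ ∫ x in a..b, (f x - m / (b - a)) ^ 2 :=
    intervalIntegral.integral_nonneg hab fun x _ => sq_nonneg _
  have h1 : ∫ x in a..b, (f x - m / (b - a)) ^ 2 =
      (∫ x in a..b, f x ^ 2) - 2 * (m / (b - a)) * m + (b - a) * (m / (b - a)) ^ 2 := by
    have : ∀ x, (f x - m / (b - a)) ^ 2 = f x ^ 2 - 2 * (m / (b - a)) * f x + (m / (b - a)) ^ 2 := by
      intro x; ring
    simp only [this]
    rw [intervalIntegral.integral_add, intervalIntegral.integral_sub,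
      intervalIntegral.integral_const_mul, intervalIntegral.integral_const, smul_eq_mul, ← hm]
    all_goals exact Continuous.intervalIntegrable (by fun_prop) _ _
  rw [h1] at h0
  have h2 : (∫ x in a..b, f x ^ 2) - 2 * (m / (b - a)) * m + (b - a) * (m / (b - a)) ^ 2
    = (∫ x in a..b, f x ^ 2) - m ^ 2 / (b - a) := by field_simp; ring
  rw [h2, sub_nonneg, div_le_iff₀ hpos] at h0
  linarith

theorem key_osc {f : ℝ → ℝ} (hf : Continuous f) {a b K : ℝ} (hab : a < b)
    (hK : ∀ x ∈ Icc a b, ∀ t ∈ Icc a b, (f x - f t) ^ 2 ≤ K) :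
    ∫ x in a..b, f x ^ 2 ≤ 2 * (b - a) * K + 2 / (b - a) * (∫ x in a..b, f x) ^ 2 := by
  set m := ∫ x in a..b, f x with hm
  have hpos : 0 < b - a := sub_pos.2 hab
  have hb : ∀ x ∈ Icc a b, f x ^ 2 ≤ 2 * K + 2 / (b - a) ^ 2 * m ^ 2 := by
    intro x hx
    have h1 : (b - a) * f x - m = ∫ t in a..b, (f x - f t) := by
      rw [intervalIntegral.integral_sub, intervalIntegral.integral_const, smul_eq_mul]
      all_goals exact Continuous.intervalIntegrable (by fun_prop) _ _
    have h2 : ((b - a) * f x - m) ^ 2 ≤ (b - a) * ((b - a) * K) := by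
      rw [h1]
      refine (key_cs (by fun_prop) hab.le).trans ?_
      gcongr
      have : ∫ t in a..b, (f x - f t) ^ 2 ≤ ∫ t in a..b, K := by
        apply intervalIntegral.integral_mono_on hab.le
        · exact Continuous.intervalIntegrable (by fun_prop) _ _
        · exact Continuous.intervalIntegrable (by fun_prop) _ _
        · intro t ht; exact hK x hx t ht
      simpa using this
    have h3 : (b - a) ^ 2 * f x ^ 2 ≤ (b - a) ^ 2 * (2 * K) + 2 * m ^ 2 := by
      nlinarith [sq_nonneg ((b - a) * f x - 2 * m)]
    have h4 : (b - a) ^ 2 * (2 * K + 2 / (b - a) ^ 2 * m ^ 2) = (b - a) ^ 2 * (2 * K) + 2 * m ^ 2 := by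
      field_simp
    rw [← h4] at h3
    exact le_of_mul_le_mul_left h3 (by positivity)
  have h5 : ∫ x in a..b, f x ^ 2 ≤ ∫ x in a..b, (2 * K + 2 / (b - a) ^ 2 * m ^ 2) := by
    apply intervalIntegral.integral_mono_on hab.le
    · exact Continuous.intervalIntegrable (by fun_prop) _ _
    · exact Continuous.intervalIntegrable (by fun_prop) _ _
    · exact hb
  rw [intervalIntegral.integral_const, smul_eq_mul] at h5
  refine h5.trans (le_of_eq ?_)
  field_simp

theorem key_ftc {f f' : ℝ → ℝ} (hf : ∀ x, HasDerivAt f (f' x) x) (hf' : Continuous f') {a b : ℝ}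
    {x t : ℝ} (hx : x ∈ Icc a b) (ht : t ∈ Icc a b) :
    (f x - f t) ^ 2 ≤ (b - a) * ∫ s in a..b, f' s ^ 2 := by
  wlog h : t ≤ x generalizing x t
  · have := this ht hx (le_of_not_ge h)
    nlinarith
  have h1 : ∫ s in t..x, f' s = f x - f t :=
    intervalIntegral.integral_eq_sub_of_hasDerivAt (fun s _ => hf s) (hf'.intervalIntegrable _ _)
  rw [← h1]
  refine (key_cs hf' h).trans ?_
  have h2 : ∫ s in t..x, f' s ^ 2 ≤ ∫ s in a..b, f' s ^ 2 := by
    apply intervalIntegral.integral_mono_interval ht.1 h hx.2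
    · exact Eventually.of_forall fun s => sq_nonneg _
    · exact Continuous.intervalIntegrable (by fun_prop) _ _
  have h3 : 0 ≤ ∫ s in t..x, f' s ^ 2 := intervalIntegral.integral_nonneg h fun x _ => sq_nonneg _
  have := ht.1; have := hx.2
  apply mul_le_mul (by linarith) h2 h3 (by linarith)

theorem key_swap {f : ℝ × ℝ → ℝ} (hf : Continuous f) {a b c d : ℝ} (hab : a ≤ b) (hcd : c ≤ d) :
    ∫ x in a..b, ∫ y in c..d, f (x, y) = ∫ y in c..d, ∫ x in a..b, f (x, y) := by
  simp only [intervalIntegral.integral_of_le hab, intervalIntegral.integral_of_le hcd]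
  apply integral_integral_swap
  rw [Measure.prod_restrict]
  have : IntegrableOn f (Icc a b ×ˢ Icc c d) (volume.prod volume) :=
    hf.continuousOn.integrableOn_compact (isCompact_Icc.prod isCompact_Icc)
  exact this.mono_set (Set.prod_mono Ioc_subset_Icc_self Ioc_subset_Icc_self)

theorem key_cont {f : ℝ × ℝ → ℝ} (hf : Continuous f) (c d : ℝ) :
    Continuous fun x => ∫ y in c..d, f (x, y) := by
  apply intervalIntegral.continuous_parametric_intervalIntegral_of_continuous' (f := fun x y => f (x, y))
  fun_prop

theorem key_cont' {f : ℝ × ℝ → ℝ} (hf : Continuous f) (c d : ℝ) :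
    Continuous fun y => ∫ x in c..d, f (x, y) := by
  apply intervalIntegral.continuous_parametric_intervalIntegral_of_continuous' (f := fun y x => f (x, y))
  fun_prop

theorem key_cell {φ φx φy : ℝ × ℝ → ℝ} (h0 : Continuous φ) (hx : Continuous φx) (hy : Continuous φy)
    (hdx : ∀ x y, HasDerivAt (fun s => φ (s, y)) (φx (x, y)) x)
    (hdy : ∀ x y, HasDerivAt (fun s => φ (x, s)) (φy (x, y)) y)
    {a b c d h : ℝ} (hh : 0 < h) (hab : b - a = h) (hcd : d - c = h) :
    ∫ x in a..b, ∫ y in c..d, φ (x, y) ^ 2 ≤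
      4 * h ^ 2 * (∫ x in a..b, ∫ y in c..d, φx (x, y) ^ 2) +
      2 * h ^ 2 * (∫ x in a..b, ∫ y in c..d, φy (x, y) ^ 2) +
      4 / h ^ 2 * (∫ x in a..b, ∫ y in c..d, φ (x, y)) ^ 2 := by
  have hab' : a < b := by linarith
  have hcd' : c < d := by linarith
  have s1 : ∀ x, ∫ y in c..d, φ (x, y) ^ 2 ≤ 2 * h * (h * ∫ y in c..d, φy (x, y) ^ 2) +
      2 / h * (∫ y in c..d, φ (x, y)) ^ 2 := by
    intro x
    have := key_osc (f := fun y => φ (x, y)) (by fun_prop) hcd'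
      (fun y hy' t ht => key_ftc (f' := fun y => φy (x, y)) (hdy x) (by fun_prop) hy' ht)
    rwa [hcd] at this
  have c1 := key_cont h0 c d
  have c2 := key_cont (f := fun p => φ p ^ 2) (by fun_prop) c d
  have c3 := key_cont (f := fun p => φy p ^ 2) (by fun_prop) c d
  have s2 : ∫ x in a..b, ∫ y in c..d, φ (x, y) ^ 2 ≤
      2 * h ^ 2 * (∫ x in a..b, ∫ y in c..d, φy (x, y) ^ 2) +
      2 / h * ∫ x in a..b, (∫ y in c..d, φ (x, y)) ^ 2 := by
    have : ∫ x in a..b, ∫ y in c..d, φ (x, y) ^ 2 ≤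
      ∫ x in a..b, (2 * h * (h * ∫ y in c..d, φy (x, y) ^ 2) +
      2 / h * (∫ y in c..d, φ (x, y)) ^ 2) := by
      apply intervalIntegral.integral_mono_on hab'.le
      · exact Continuous.intervalIntegrable (by fun_prop) _ _
      · exact Continuous.intervalIntegrable (by fun_prop) _ _
      · exact fun x _ => s1 x
    rw [intervalIntegral.integral_add, intervalIntegral.integral_const_mul,
      intervalIntegral.integral_const_mul, intervalIntegral.integral_const_mul] at this
    · linarith
    · exact Continuous.intervalIntegrable (by fun_prop) _ _
    · exact Continuous.intervalIntegrable (by fun_prop) _ _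
  have s3 : ∀ x ∈ Icc a b, ∀ t ∈ Icc a b,
      ((∫ y in c..d, φ (x, y)) - ∫ y in c..d, φ (t, y)) ^ 2 ≤
        h * (h * ∫ x in a..b, ∫ y in c..d, φx (x, y) ^ 2) := by
    intro x hx' t ht
    rw [← intervalIntegral.integral_sub (Continuous.intervalIntegrable (by fun_prop) _ _)
      (Continuous.intervalIntegrable (by fun_prop) _ _)]
    refine (key_cs (by fun_prop) hcd'.le).trans ?_
    rw [hcd]
    gcongr
    rw [key_swap (f := fun p => φx p ^ 2) (by fun_prop) hab'.le hcd'.le,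
      ← intervalIntegral.integral_const_mul]
    have c4 := key_cont' (f := fun p => φx p ^ 2) (by fun_prop) a b
    apply intervalIntegral.integral_mono_on hcd'.le
    · exact Continuous.intervalIntegrable (by fun_prop) _ _
    · exact Continuous.intervalIntegrable (by fun_prop) _ _
    · intro y _
      have := key_ftc (f := fun s => φ (s, y)) (f' := fun s => φx (s, y)) (fun s => hdx s y)
        (by fun_prop) hx' ht
      rwa [hab] at this
  have s4 := key_osc c1 hab' s3
  rw [hab] at s4
  have s5 : 2 / h * ∫ x in a..b, (∫ y in c..d, φ (x, y)) ^ 2 ≤ 2 / h * (2 * h * (h * (h * ∫ x in a..b, ∫ y in c..d, φx (x, y) ^ 2)) +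
    2 / h * (∫ x in a..b, ∫ y in c..d, φ (x, y)) ^ 2) := by gcongr
  have s6 : 2 / h * (2 * h * (h * (h * ∫ x in a..b, ∫ y in c..d, φx (x, y) ^ 2)) +
    2 / h * (∫ x in a..b, ∫ y in c..d, φ (x, y)) ^ 2) = 
     4 * h ^ 2 * (∫ x in a..b, ∫ y in c..d, φx (x, y) ^ 2) + 4 / h ^ 2 * (∫ x in a..b, ∫ y in c..d, φ (x, y)) ^ 2 := by
    field_simp; ring
  linarith

/-- monotonicity of iterated integrals -/
theorem key_mono {f g : ℝ × ℝ → ℝ} (hf : Continuous f) (hg : Continuous g) {a b c d : ℝ}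
    (hab : a ≤ b) (hcd : c ≤ d) (hfg : ∀ x ∈ Icc a b, ∀ y ∈ Icc c d, f (x, y) ≤ g (x, y)) :
    ∫ x in a..b, ∫ y in c..d, f (x, y) ≤ ∫ x in a..b, ∫ y in c..d, g (x, y) := by
  have c1 := key_cont hf c d
  have c2 := key_cont hg c d
  apply intervalIntegral.integral_mono_on hab (c1.intervalIntegrable _ _) (c2.intervalIntegrable _ _)
  intro x hx
  apply intervalIntegral.integral_mono_on hcd
  · exact Continuous.intervalIntegrable (by fun_prop) _ _
  · exact Continuous.intervalIntegrable (by fun_prop) _ _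
  · exact hfg x hx

theorem key_sum1 {f : ℝ → ℝ} (hf : Continuous f) {N : ℕ} (hN : 0 < N) :
    ∑ i ∈ Finset.range N, ∫ x in (i / N : ℝ)..((i + 1) / N : ℝ), f x = ∫ x in (0:ℝ)..1, f x := by
  have := intervalIntegral.sum_integral_adjacent_intervals (f := f) (μ := volume) (a := fun i : ℕ => (i / N : ℝ)) (n := N)
    (fun k _ => hf.intervalIntegrable _ _)
  have hN' : (N : ℝ) ≠ 0 := by positivity
  simpa [hN'] using this

theorem key_sum2 {f : ℝ × ℝ → ℝ} (hf : Continuous f) {N : ℕ} (hN : 0 < N) :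
    ∑ i ∈ Finset.range N, ∑ j ∈ Finset.range N, 
      ∫ x in (i / N : ℝ)..((i + 1) / N : ℝ), ∫ y in (j / N : ℝ)..((j + 1) / N : ℝ), f (x, y) = 
    ∫ x in (0:ℝ)..1, ∫ y in (0:ℝ)..1, f (x, y) := by
  rw [← key_sum1 (key_cont hf 0 1) hN]
  refine Finset.sum_congr rfl fun i _ => ?_
  rw [← intervalIntegral.integral_finsetSum (fun j _ => (key_cont hf _ _).intervalIntegrable _ _)]
  refine intervalIntegral.integral_congr fun x _ => ?_
  exact key_sum1 (f := fun y => f (x, y)) (by fun_prop) hN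

theorem key_add {f g : ℝ × ℝ → ℝ} (hf : Continuous f) (hg : Continuous g) (a b c d : ℝ) :
    ∫ x in a..b, ∫ y in c..d, (f (x, y) + g (x, y)) =
    (∫ x in a..b, ∫ y in c..d, f (x, y)) + ∫ x in a..b, ∫ y in c..d, g (x, y) := by
  rw [← intervalIntegral.integral_add ((key_cont hf _ _).intervalIntegrable _ _)
    ((key_cont hg _ _).intervalIntegrable _ _)]
  refine intervalIntegral.integral_congr fun x _ => ?_
  exact intervalIntegral.integral_add (Continuous.intervalIntegrable (by fun_prop) _ _)
    (Continuous.intervalIntegrable (by fun_prop) _ _)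

theorem key_ptw {f f' W : ℝ → ℝ} (hf : ∀ x, HasDerivAt f (f' x) x) (hf' : Continuous f') (hW : Continuous W)
    (hz : f 0 = 0) {y x : ℝ} (hy : 0 ≤ y) (hyx : y ≤ x) (hx : x ≤ 1) (hw : ∀ s, x * f' s ^ 2 ≤ W s ^ 2) : 
    f y ^ 2 ≤ ∫ s in (0:ℝ)..1, W s ^ 2 := by
  have h1 := key_ftc hf hf' (a := 0) (b := y) (x := y) (t := 0) ⟨hy, le_rfl⟩ ⟨le_rfl, hy⟩
  rw [hz, sub_zero, sub_zero] at h1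
  have h2 : ∫ s in (0:ℝ)..y, f' s ^ 2 ≤ ∫ s in (0:ℝ)..1, f' s ^ 2 := by
    apply intervalIntegral.integral_mono_interval le_rfl hy (hyx.trans hx)
    · exact Eventually.of_forall fun s => sq_nonneg _
    · exact Continuous.intervalIntegrable (by fun_prop) _ _
  have h3 : 0 ≤ ∫ s in (0:ℝ)..1, f' s ^ 2 := intervalIntegral.integral_nonneg zero_le_one fun x _ => sq_nonneg _
  have h4 : x * ∫ s in (0:ℝ)..1, f' s ^ 2 ≤ ∫ s in (0:ℝ)..1, W s ^ 2 := by
    rw [← intervalIntegral.integral_const_mul]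
    apply intervalIntegral.integral_mono_on zero_le_one
    · exact Continuous.intervalIntegrable (by fun_prop) _ _
    · exact Continuous.intervalIntegrable (by fun_prop) _ _
    · exact fun s _ => hw s
  nlinarith

theorem key_main {φ φx φy Wx Wy : ℝ × ℝ → ℝ} (h0 : Continuous φ) (hx : Continuous φx) (hy : Continuous φy)
    (hWx : Continuous Wx) (hWy : Continuous Wy)
    (hdx : ∀ x y, HasDerivAt (fun s => φ (s, y)) (φx (x, y)) x)
    (hdy : ∀ x y, HasDerivAt (fun s => φ (x, s)) (φy (x, y)) y)
    (hz1 : ∀ x, φ (x, 0) = 0) (hz2 : ∀ y, φ (0, y) = 0)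
    (hw1 : ∀ x y, 0 ≤ y → y ≤ 1 → y * φx (x, y) ^ 2 ≤ Wx (x, y) ^ 2)
    (hw2 : ∀ x y, 0 ≤ x → x ≤ 1 → x * φy (x, y) ^ 2 ≤ Wy (x, y) ^ 2) :
    (∫ x in (0:ℝ)..1, ∫ y in (0:ℝ)..1, φ (x, y) ^ 2 ≤
      (∫ x in (0:ℝ)..1, ∫ y in (0:ℝ)..1, Wx (x, y) ^ 2) +
        ∫ x in (0:ℝ)..1, ∫ y in (0:ℝ)..1, Wy (x, y) ^ 2) ∧ 
    ∀ N : ℕ, 0 < N → 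
    ∫ x in (0:ℝ)..1, ∫ y in (0:ℝ)..1, φ (x, y) ^ 2 ≤
      5 / N * ((∫ x in (0:ℝ)..1, ∫ y in (0:ℝ)..1, Wx (x, y) ^ 2) +
        ∫ x in (0:ℝ)..1, ∫ y in (0:ℝ)..1, Wy (x, y) ^ 2) + 
      ∑ i ∈ Finset.range N, ∑ j ∈ Finset.range N, 4 * N ^ 2 * 
        (∫ x in (i / N : ℝ)..((i + 1) / N : ℝ), ∫ y in (j / N : ℝ)..((j + 1) / N : ℝ), φ (x, y)) ^ 2 := by
  set A : ℝ → ℝ := fun y => ∫ x in (0:ℝ)..1, Wx (x, y) ^ 2 with hA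
  set B : ℝ → ℝ := fun x => ∫ y in (0:ℝ)..1, Wy (x, y) ^ 2 with hB
  have cA : Continuous A := key_cont' (f := fun p => Wx p ^ 2) (by fun_prop) 0 1
  have cB : Continuous B := key_cont (f := fun p => Wy p ^ 2) (by fun_prop) 0 1
  have A0 : ∀ y, 0 ≤ A y := fun y => intervalIntegral.integral_nonneg zero_le_one fun x _ => sq_nonneg _
  have B0 : ∀ y, 0 ≤ B y := fun y => intervalIntegral.integral_nonneg zero_le_one fun x _ => sq_nonneg _
  have hPB : ∀ x y, 0 ≤ y → y ≤ x → x ≤ 1 → φ (x, y) ^ 2 ≤ B x := by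
    intro x y h1 h2 h3
    exact key_ptw (f := fun s => φ (x, s)) (f' := fun s => φy (x, s)) (W := fun s => Wy (x, s)) (hdy x)
      (by fun_prop) (by fun_prop) (hz1 x) h1 h2 h3 fun s => hw2 x s (h1.trans h2) h3
  have hPA : ∀ x y, 0 ≤ x → x ≤ y → y ≤ 1 → φ (x, y) ^ 2 ≤ A y := by
    intro x y h1 h2 h3
    exact key_ptw (f := fun s => φ (s, y)) (f' := fun s => φx (s, y)) (W := fun s => Wx (s, y))
      (fun s => hdx s y)
      (by fun_prop) (by fun_prop) (hz2 y) h1 h2 h3 fun s => hw1 s y (h1.trans h2) h3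
  have hPAB : ∀ x y, 0 ≤ x → x ≤ 1 → 0 ≤ y → y ≤ 1 → φ (x, y) ^ 2 ≤ A y + B x := by
    intro x y h1 h2 h3 h4
    rcases le_total x y with h | h
    · linarith [hPA x y h1 h h4, B0 x]
    · linarith [hPB x y h3 h h2, A0 y]
  have eA : ∫ x in (0:ℝ)..1, ∫ y in (0:ℝ)..1, Wx (x, y) ^ 2 = ∫ y in (0:ℝ)..1, A y :=
    key_swap (f := fun p => Wx p ^ 2) (by fun_prop) zero_le_one zero_le_one
  rw [eA]
  change _ ≤ _ + ∫ x in (0:ℝ)..1, B x ∧ ∀ N : ℕ, 0 < N → _ ≤ 5 / N * (_ + ∫ x in (0:ℝ)..1, B x) + _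
  have iA : ∀ a b c d : ℝ, ∫ x in a..b, ∫ y in c..d, A y = (b - a) * ∫ y in c..d, A y := by
    intro a b c d; rw [intervalIntegral.integral_const, smul_eq_mul]
  have iB : ∀ a b c d : ℝ, ∫ x in a..b, ∫ y in c..d, B x = (d - c) * ∫ x in a..b, B x := by
    intro a b c d; simp only [intervalIntegral.integral_const, smul_eq_mul,
      intervalIntegral.integral_const_mul]
  constructor
  · have := key_mono (f := fun p => φ p ^ 2) (g := fun p => A p.2 + B p.1) (by fun_prop) (by fun_prop)
      zero_le_one zero_le_one (fun x hx y hy => hPAB x y hx.1 hx.2 hy.1 hy.2)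
    refine this.trans (le_of_eq ?_)
    rw [key_add (f := fun p => A p.2) (g := fun p => B p.1) (by fun_prop) (by fun_prop), iA, iB]
    ring
  intro N hN
  have hN' : (0:ℝ) < N := by exact_mod_cast hN
  have hcell : ∀ i ∈ Finset.range N, ∀ j ∈ Finset.range N,
      ∫ x in (i / N : ℝ)..((i + 1) / N : ℝ), ∫ y in (j / N : ℝ)..((j + 1) / N : ℝ), φ (x, y) ^ 2 ≤
      (if i = 0 then 1 / N * ∫ y in (j / N : ℝ)..((j + 1) / N : ℝ), A y else 0) +
      (if j = 0 then 1 / N * ∫ x in (i / N : ℝ)..((i + 1) / N : ℝ), B x else 0) +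
      4 / N * (∫ x in (i / N : ℝ)..((i + 1) / N : ℝ), ∫ y in (j / N : ℝ)..((j + 1) / N : ℝ), 
        (Wx (x, y) ^ 2 + Wy (x, y) ^ 2)) + 
      4 * N ^ 2 * 
        (∫ x in (i / N : ℝ)..((i + 1) / N : ℝ), ∫ y in (j / N : ℝ)..((j + 1) / N : ℝ), φ (x, y)) ^ 2 := by
    intro i hi j hj
    have hi' : ((i : ℝ) + 1) / N ≤ 1 := by
      rw [div_le_one hN']; exact_mod_cast Finset.mem_range.1 hi
    have hj' : ((j : ℝ) + 1) / N ≤ 1 := by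
      rw [div_le_one hN']; exact_mod_cast Finset.mem_range.1 hj
    have hi0 : (0:ℝ) ≤ i / N := by positivity
    have hj0 : (0:ℝ) ≤ j / N := by positivity
    have di : ((i : ℝ) + 1) / N - i / N = 1 / N := by ring
    have dj : ((j : ℝ) + 1) / N - j / N = 1 / N := by ring
    have hh : (0:ℝ) < 1 / N := by positivity
    have hii : (i : ℝ) / N ≤ (i + 1) / N := by linarith
    have hjj : (j : ℝ) / N ≤ (j + 1) / N := by linarith
    have n1 : 0 ≤ 4 / N * (∫ x in (i / N : ℝ)..((i + 1) / N : ℝ), ∫ y in (j / N : ℝ)..((j + 1) / N : ℝ), 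
        (Wx (x, y) ^ 2 + Wy (x, y) ^ 2)) := by
      apply mul_nonneg (by positivity)
      apply intervalIntegral.integral_nonneg hii fun x _ => ?_
      apply intervalIntegral.integral_nonneg hjj fun y _ => ?_
      positivity
    have n2 : 0 ≤ 4 * N ^ 2 * 
        (∫ x in (i / N : ℝ)..((i + 1) / N : ℝ), ∫ y in (j / N : ℝ)..((j + 1) / N : ℝ), φ (x, y)) ^ 2 := by
      positivity
    by_cases ci : i = 0
    · by_cases cj : j = 0
      · have := key_mono (f := fun p => φ p ^ 2) (g := fun p => A p.2 + B p.1) (by fun_prop) (by fun_prop)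
          hii hjj (fun x hx y hy => hPAB x y (hi0.trans hx.1) (hx.2.trans hi') (hj0.trans hy.1) (hy.2.trans hj'))
        rw [key_add (f := fun p => A p.2) (g := fun p => B p.1) (by fun_prop) (by fun_prop), iA, iB, di, dj] at this
        rw [if_pos ci, if_pos cj]
        linarith
      · have := key_mono (f := fun p => φ p ^ 2) (g := fun p => A p.2) (by fun_prop) (by fun_prop)
          hii hjj (fun x hx y hy => hPA x y (hi0.trans hx.1) (hx.2.trans (le_trans (by
            rw [ci]; gcongr
            simp only [Nat.cast_zero, zero_add, Nat.one_le_cast]; omega) hy.1)) (hy.2.trans hj'))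
        rw [iA, di] at this
        rw [if_pos ci, if_neg cj]
        linarith
    · by_cases cj : j = 0
      · have := key_mono (f := fun p => φ p ^ 2) (g := fun p => B p.1) (by fun_prop) (by fun_prop)
          hii hjj (fun x hx y hy => hPB x y (hj0.trans hy.1) (hy.2.trans (le_trans (by
            rw [cj]; gcongr
            simp only [Nat.cast_zero, zero_add, Nat.one_le_cast]; omega) hx.1)) (hx.2.trans hi'))
        rw [iB, dj] at this
        rw [if_neg ci, if_pos cj]
        linarith
      · rw [if_neg ci, if_neg cj]
        have hi1 : 1 / (N : ℝ) ≤ i / N := by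
          gcongr; exact_mod_cast Nat.one_le_iff_ne_zero.2 ci
        have hj1 : 1 / (N : ℝ) ≤ j / N := by
          gcongr; exact_mod_cast Nat.one_le_iff_ne_zero.2 cj
        have k1 := key_cell h0 hx hy hdx hdy hh di dj
        have k2 := key_mono (f := fun p => 1 / N * φx p ^ 2) (g := fun p => Wx p ^ 2) (by fun_prop) (by fun_prop)
          hii hjj (fun x hx y hy => by
            refine le_trans ?_ (hw1 x y (hj0.trans hy.1) (hy.2.trans hj'))
            gcongr
            exact hj1.trans hy.1)
        have k3 := key_mono (f := fun p => 1 / N * φy p ^ 2) (g := fun p => Wy p ^ 2) (by fun_prop) (by fun_prop)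
          hii hjj (fun x hx y hy => by
            refine le_trans ?_ (hw2 x y (hi0.trans hx.1) (hx.2.trans hi'))
            gcongr
            exact hi1.trans hx.1)
        have k4 : 0 ≤ ∫ x in (i / N : ℝ)..((i + 1) / N : ℝ), ∫ y in (j / N : ℝ)..((j + 1) / N : ℝ), φy (x, y) ^ 2 := by
          apply intervalIntegral.integral_nonneg hii fun x _ => ?_
          apply intervalIntegral.integral_nonneg hjj fun y _ => ?_
          positivity
        rw [key_add (f := fun p => Wx p ^ 2) (g := fun p => Wy p ^ 2) (by fun_prop) (by fun_prop)]
        simp only [intervalIntegral.integral_const_mul] at k2 k3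
        have k5 := mul_le_mul_of_nonneg_left k2 hh.le
        have k6 := mul_le_mul_of_nonneg_left k3 hh.le
        have e1 : 4 / (1 / (N : ℝ)) ^ 2 = 4 * N ^ 2 := by field_simp
        rw [e1] at k1
        have e2 : 4 / (N : ℝ) = 4 * (1 / N) := by ring
        rw [e2]
        have k7 := mul_nonneg (sq_nonneg (1 / (N : ℝ))) k4
        nlinarith
  rw [← key_sum2 (f := fun p => φ p ^ 2) (by fun_prop) hN]
  refine (Finset.sum_le_sum fun i hi => Finset.sum_le_sum fun j hj => hcell i hi j hj).trans ?_
  simp only [Finset.sum_add_distrib]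
  rw [Finset.sum_comm]
  simp only [Finset.sum_ite_eq', Finset.mem_range, hN, if_true]
  simp only [← Finset.mul_sum]
  rw [key_sum1 cA hN, key_sum1 cB hN, key_sum2 (f := fun p => Wx p ^ 2 + Wy p ^ 2) (by fun_prop) hN,
    key_add (f := fun p => Wx p ^ 2) (g := fun p => Wy p ^ 2) (by fun_prop) (by fun_prop), eA]
  apply le_of_eq
  change _ + 4 / (N : ℝ) * (_ + ∫ x in (0:ℝ)..1, B x) + _ = _
  ring

end

abbrev muO : Measure (ℝ × ℝ) := volume.restrict Omega

abbrev L2O := Lp ℝ 2 muO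

theorem isOpen_Omega : IsOpen Omega := isOpen_Ioo.prod isOpen_Ioo

theorem meas_Omega : MeasurableSet Omega := isOpen_Omega.measurableSet

instance finite_muO : IsFiniteMeasure muO := by
  refine ⟨?_⟩
  rw [Measure.restrict_apply_univ]
  have : Omega ⊆ Icc (0:ℝ) 1 ×ˢ Icc (0:ℝ) 1 := Set.prod_mono Ioo_subset_Icc_self Ioo_subset_Icc_self
  exact (measure_mono this).trans_lt (isCompact_Icc.prod isCompact_Icc).measure_lt_top

theorem test_add {φ ψ : ℝ × ℝ → ℝ} (hφ : IsTest φ) (hψ : IsTest ψ) : IsTest (fun p => φ p + ψ p) := by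
  refine ⟨hφ.1.add hψ.1, hφ.2.1.add hψ.2.1, ?_⟩
  exact (tsupport_add φ ψ).trans (union_subset hφ.2.2 hψ.2.2)

theorem test_smul {φ : ℝ × ℝ → ℝ} (c : ℝ) (hφ : IsTest φ) : IsTest (fun p => c * φ p) := by
  refine ⟨contDiff_const.mul hφ.1, hφ.2.1.mul_left, ?_⟩
  exact (tsupport_mul_subset_right).trans hφ.2.2

theorem test_diff {φ : ℝ × ℝ → ℝ} (hφ : IsTest φ) : Differentiable ℝ φ :=
  hφ.1.differentiable (by simp)

theorem test_cont_fderiv {φ : ℝ × ℝ → ℝ} (hφ : IsTest φ) : Continuous (fderiv ℝ φ) :=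
  hφ.1.continuous_fderiv (by simp)

theorem pdx_cont {φ : ℝ × ℝ → ℝ} (hφ : IsTest φ) : Continuous (pdx φ) :=
  (test_cont_fderiv hφ).clm_apply continuous_const

theorem pdy_cont {φ : ℝ × ℝ → ℝ} (hφ : IsTest φ) : Continuous (pdy φ) :=
  (test_cont_fderiv hφ).clm_apply continuous_const

theorem pdx_supp {φ : ℝ × ℝ → ℝ} (hφ : IsTest φ) : HasCompactSupport (pdx φ) :=
  hφ.2.1.fderiv_apply ℝ (1, 0)

theorem pdy_supp {φ : ℝ × ℝ → ℝ} (hφ : IsTest φ) : HasCompactSupport (pdy φ) :=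
  hφ.2.1.fderiv_apply ℝ (0, 1)

theorem test_zero {φ : ℝ × ℝ → ℝ} (hφ : IsTest φ) {p : ℝ × ℝ} (hp : p ∉ Omega) : φ p = 0 :=
  image_eq_zero_of_notMem_tsupport fun h => hp (hφ.2.2 h)

theorem pdx_zero {φ : ℝ × ℝ → ℝ} (hφ : IsTest φ) {p : ℝ × ℝ} (hp : p ∉ Omega) : pdx φ p = 0 := by
  unfold pdx
  rw [image_eq_zero_of_notMem_tsupport fun h => hp (hφ.2.2 (tsupport_fderiv_subset ℝ h))]; rfl

theorem pdy_zero {φ : ℝ × ℝ → ℝ} (hφ : IsTest φ) {p : ℝ × ℝ} (hp : p ∉ Omega) : pdy φ p = 0 := by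
  unfold pdy
  rw [image_eq_zero_of_notMem_tsupport fun h => hp (hφ.2.2 (tsupport_fderiv_subset ℝ h))]; rfl

theorem pdx_deriv {φ : ℝ × ℝ → ℝ} (hφ : IsTest φ) (x y : ℝ) :
    HasDerivAt (fun s => φ (s, y)) (pdx φ (x, y)) x := by
  have h1 := (test_diff hφ (x, y)).hasFDerivAt
  have h2 : HasDerivAt (fun s : ℝ => (s, y)) ((1 : ℝ), (0 : ℝ)) x :=
    (hasDerivAt_id x).prodMk (hasDerivAt_const x y)
  exact h1.comp_hasDerivAt x h2

theorem pdy_deriv {φ : ℝ × ℝ → ℝ} (hφ : IsTest φ) (x y : ℝ) :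
    HasDerivAt (fun s => φ (x, s)) (pdy φ (x, y)) y := by
  have h1 := (test_diff hφ (x, y)).hasFDerivAt
  have h2 : HasDerivAt (fun s : ℝ => (x, s)) ((0 : ℝ), (1 : ℝ)) y :=
    (hasDerivAt_const y x).prodMk (hasDerivAt_id y)
  exact h1.comp_hasDerivAt y h2

theorem pdx_add {φ ψ : ℝ × ℝ → ℝ} (hφ : IsTest φ) (hψ : IsTest ψ) (p : ℝ × ℝ) :
    pdx (fun p => φ p + ψ p) p = pdx φ p + pdx ψ p := by
  unfold pdx
  rw [fderiv_fun_add (test_diff hφ p) (test_diff hψ p)]; rfl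

theorem pdy_add {φ ψ : ℝ × ℝ → ℝ} (hφ : IsTest φ) (hψ : IsTest ψ) (p : ℝ × ℝ) :
    pdy (fun p => φ p + ψ p) p = pdy φ p + pdy ψ p := by
  unfold pdy
  rw [fderiv_fun_add (test_diff hφ p) (test_diff hψ p)]; rfl

theorem pdx_smul {φ : ℝ × ℝ → ℝ} (c : ℝ) (hφ : IsTest φ) (p : ℝ × ℝ) :
    pdx (fun p => c * φ p) p = c * pdx φ p := by
  unfold pdx
  rw [fderiv_const_mul (test_diff hφ p)]; rfl

theorem pdy_smul {φ : ℝ × ℝ → ℝ} (c : ℝ) (hφ : IsTest φ) (p : ℝ × ℝ) :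
    pdy (fun p => c * φ p) p = c * pdy φ p := by
  unfold pdy
  rw [fderiv_const_mul (test_diff hφ p)]; rfl

def tw1 (α : ℝ) (φ : ℝ × ℝ → ℝ) (p : ℝ × ℝ) : ℝ := p.2 ^ α * pdx φ p
def tw2 (α : ℝ) (φ : ℝ × ℝ → ℝ) (p : ℝ × ℝ) : ℝ := p.1 ^ α * pdy φ p

theorem tw1_cont {α : ℝ} (hα : 0 ≤ α) {φ : ℝ × ℝ → ℝ} (hφ : IsTest φ) : Continuous (tw1 α φ) :=
  ((Real.continuous_rpow_const hα).comp continuous_snd).mul (pdx_cont hφ)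

theorem tw2_cont {α : ℝ} (hα : 0 ≤ α) {φ : ℝ × ℝ → ℝ} (hφ : IsTest φ) : Continuous (tw2 α φ) :=
  ((Real.continuous_rpow_const hα).comp continuous_fst).mul (pdy_cont hφ)

theorem test_memLp {φ : ℝ × ℝ → ℝ} (hφ : IsTest φ) : MemLp φ 2 muO :=
  hφ.1.continuous.memLp_of_hasCompactSupport hφ.2.1

theorem pdx_memLp {φ : ℝ × ℝ → ℝ} (hφ : IsTest φ) : MemLp (pdx φ) 2 muO :=
  (pdx_cont hφ).memLp_of_hasCompactSupport (pdx_supp hφ)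

theorem pdy_memLp {φ : ℝ × ℝ → ℝ} (hφ : IsTest φ) : MemLp (pdy φ) 2 muO :=
  (pdy_cont hφ).memLp_of_hasCompactSupport (pdy_supp hφ)

theorem tw1_memLp {α : ℝ} (hα : 0 ≤ α) {φ : ℝ × ℝ → ℝ} (hφ : IsTest φ) : MemLp (tw1 α φ) 2 muO :=
  (tw1_cont hα hφ).memLp_of_hasCompactSupport (pdx_supp hφ).mul_left

theorem tw2_memLp {α : ℝ} (hα : 0 ≤ α) {φ : ℝ × ℝ → ℝ} (hφ : IsTest φ) : MemLp (tw2 α φ) 2 muO :=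
  (tw2_cont hα hφ).memLp_of_hasCompactSupport (pdy_supp hφ).mul_left

/-- the graph of test functions -/
def Dsub (α₁ α₂ : ℝ) : Submodule ℝ (L2O × L2O × L2O) where
  carrier := {F | ∃ φ, IsTest φ ∧ F.1 =ᵐ[muO] φ ∧ F.2.1 =ᵐ[muO] tw1 α₁ φ ∧ F.2.2 =ᵐ[muO] tw2 α₂ φ}
  add_mem' := by
    rintro F G ⟨φ, h0, h1, h2, h3⟩ ⟨ψ, g0, g1, g2, g3⟩
    refine ⟨_, test_add h0 g0, ?_, ?_, ?_⟩
    · filter_upwards [Lp.coeFn_add F.1 G.1, h1, g1] with p e a b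
      rw [Prod.fst_add, e, Pi.add_apply, a, b]
    · filter_upwards [Lp.coeFn_add F.2.1 G.2.1, h2, g2] with p e a b
      rw [Prod.snd_add, Prod.fst_add, e, Pi.add_apply, a, b]
      simp only [tw1, pdx_add h0 g0]; ring
    · filter_upwards [Lp.coeFn_add F.2.2 G.2.2, h3, g3] with p e a b
      rw [Prod.snd_add, Prod.snd_add, e, Pi.add_apply, a, b]
      simp only [tw2, pdy_add h0 g0]; ring
  zero_mem' := by
    refine ⟨fun _ => 0, ⟨contDiff_const, HasCompactSupport.zero, by simp [tsupport]⟩, Lp.coeFn_zero _ _ _, ?_, ?_⟩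
    · refine (Lp.coeFn_zero _ _ _).trans (Eventually.of_forall fun p => ?_)
      simp [tw1, pdx]
    · refine (Lp.coeFn_zero _ _ _).trans (Eventually.of_forall fun p => ?_)
      simp [tw2, pdy]
  smul_mem' := by
    rintro c F ⟨φ, h0, h1, h2, h3⟩
    refine ⟨_, test_smul c h0, ?_, ?_, ?_⟩
    · filter_upwards [Lp.coeFn_smul c F.1, h1] with p e a
      rw [Prod.smul_fst, e, Pi.smul_apply, a, smul_eq_mul]
    · filter_upwards [Lp.coeFn_smul c F.2.1, h2] with p e a
      rw [Prod.smul_snd, Prod.smul_fst, e, Pi.smul_apply, a, smul_eq_mul]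
      simp only [tw1, pdx_smul c h0]; ring
    · filter_upwards [Lp.coeFn_smul c F.2.2, h3] with p e a
      rw [Prod.smul_snd, Prod.smul_snd, e, Pi.smul_apply, a, smul_eq_mul]
      simp only [tw2, pdy_smul c h0]; ring

theorem l2_inner (F G : L2O) {f g : ℝ × ℝ → ℝ} (hF : F =ᵐ[muO] f) (hG : G =ᵐ[muO] g) :
    inner ℝ F G = ∫ p in Omega, f p * g p := by
  rw [L2.inner_def]
  apply integral_congr_ae
  filter_upwards [hF, hG] with p a b
  rw [a, b]; simp [mul_comm]

theorem l2_norm (F : L2O) {f : ℝ × ℝ → ℝ} (hF : F =ᵐ[muO] f) :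
    ‖F‖ ^ 2 = ∫ p in Omega, f p ^ 2 := by
  rw [← real_inner_self_eq_norm_sq, l2_inner F F hF hF]
  simp only [pow_two]

theorem cell_int {f : ℝ × ℝ → ℝ} (hf : Continuous f) (hz : ∀ p ∉ Omega, f p = 0) {a b c d : ℝ}
    (hab : a ≤ b) (hcd : c ≤ d) :
    ∫ p in Ioc a b ×ˢ Ioc c d, f p ∂muO = ∫ x in a..b, ∫ y in c..d, f (x, y) := by
  have hm : MeasurableSet (Ioc a b ×ˢ Ioc c d) := measurableSet_Ioc.prod measurableSet_Ioc
  rw [Measure.restrict_restrict hm]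
  rw [← setIntegral_eq_of_subset_of_forall_sdiff_eq_zero hm (inter_subset_left)
    (fun p hp => hz p fun h => hp.2 ⟨hp.1, h⟩)]
  rw [Measure.volume_eq_prod, setIntegral_prod]
  · simp only [intervalIntegral.integral_of_le hab, intervalIntegral.integral_of_le hcd]
  · have : IntegrableOn f (Icc a b ×ˢ Icc c d) (volume.prod volume) :=
      hf.continuousOn.integrableOn_compact (isCompact_Icc.prod isCompact_Icc)
    exact this.mono_set (Set.prod_mono Ioc_subset_Icc_self Ioc_subset_Icc_self)

theorem all_int {f : ℝ × ℝ → ℝ} (hf : Continuous f) (hz : ∀ p ∉ Omega, f p = 0) :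
    ∫ p in Omega, f p = ∫ x in (0:ℝ)..1, ∫ y in (0:ℝ)..1, f (x, y) := by
  rw [← cell_int hf hz zero_le_one zero_le_one, Measure.restrict_restrict (measurableSet_Ioc.prod measurableSet_Ioc)]
  congr 2
  symm
  rw [inter_eq_right]
  exact Set.prod_mono Ioo_subset_Ioc_self Ioo_subset_Ioc_self

def gcell (N : ℕ) (i j : ℕ) : L2O :=
  indicatorConstLp 2 (μ := muO)
    (s := Ioc (i / N : ℝ) ((i + 1) / N : ℝ) ×ˢ Ioc (j / N : ℝ) ((j + 1) / N : ℝ))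
    (measurableSet_Ioc.prod measurableSet_Ioc) (measure_ne_top _ _) (2 * N : ℝ)

theorem wt_ineq {α : ℝ} (hα : α ∈ Ioo (0:ℝ) (1/2)) {y : ℝ} (h0 : 0 ≤ y) (h1 : y ≤ 1) (t : ℝ) :
    y * t ^ 2 ≤ (y ^ α * t) ^ 2 := by
  rw [mul_pow]
  gcongr
  rw [← Real.rpow_natCast, ← Real.rpow_mul h0]
  rcases h0.eq_or_lt with rfl | hp
  · exact Real.rpow_nonneg le_rfl _
  calc y = y ^ (1:ℝ) := (Real.rpow_one y).symm
    _ ≤ _ := Real.rpow_le_rpow_of_exponent_ge hp h1 (by push_cast; linarith [hα.2])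

theorem D_key {α₁ α₂ : ℝ} (hα₁ : α₁ ∈ Ioo (0:ℝ) (1/2)) (hα₂ : α₂ ∈ Ioo (0:ℝ) (1/2))
    {F : L2O × L2O × L2O} (hF : F ∈ Dsub α₁ α₂) :
    ‖F.1‖ ^ 2 ≤ ‖F.2.1‖ ^ 2 + ‖F.2.2‖ ^ 2 ∧ ∀ N : ℕ, 0 < N → 
    ‖F.1‖ ^ 2 ≤ 5 / N * (‖F.2.1‖ ^ 2 + ‖F.2.2‖ ^ 2) +
      ∑ i ∈ Finset.range N, ∑ j ∈ Finset.range N, inner ℝ (gcell N i j) F.1 ^ 2 := by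
  obtain ⟨φ, h0, h1, h2, h3⟩ := hF
  have c1 := tw1_cont hα₁.1.le h0
  have c2 := tw2_cont hα₂.1.le h0
  have c0 := h0.1.continuous
  have := key_main c0 (pdx_cont h0) (pdy_cont h0) c1 c2 (pdx_deriv h0) (pdy_deriv h0)
    (fun x => test_zero h0 (by simp [Omega])) (fun x => test_zero h0 (by simp [Omega]))
    (fun x y hy hy1 => wt_ineq hα₁ hy hy1 _) (fun x y hy hy1 => wt_ineq hα₂ hy hy1 _)
  rw [l2_norm _ h1, l2_norm _ h2, l2_norm _ h3,
    all_int (f := fun p => φ p ^ 2) (by fun_prop) (fun p hp => by simp [test_zero h0 hp]),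
    all_int (f := fun p => tw1 α₁ φ p ^ 2) (by fun_prop) (fun p hp => by simp [tw1, pdx_zero h0 hp]),
    all_int (f := fun p => tw2 α₂ φ p ^ 2) (by fun_prop) (fun p hp => by simp [tw2, pdy_zero h0 hp])]
  refine ⟨this.1, fun N hN => (this.2 N hN).trans (le_of_eq ?_)⟩
  congr 1
  refine Finset.sum_congr rfl fun i _ => Finset.sum_congr rfl fun j _ => ?_
  have hN' : (0:ℝ) < N := by exact_mod_cast hN
  rw [gcell, L2.inner_indicatorConstLp_eq_inner_setIntegral,
    setIntegral_congr_ae (g := φ) (measurableSet_Ioc.prod measurableSet_Ioc)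
      (h1.mono fun p hp _ => hp),
    cell_int c0 (fun p hp => test_zero h0 hp) (by gcongr; simp) (by gcongr; simp)]
  simp only [RCLike.inner_apply, conj_trivial]
  ring

theorem D_key' {α₁ α₂ : ℝ} (hα₁ : α₁ ∈ Ioo (0:ℝ) (1/2)) (hα₂ : α₂ ∈ Ioo (0:ℝ) (1/2))
    {F : L2O × L2O × L2O} (hF : F ∈ (Dsub α₁ α₂).topologicalClosure) :
    ‖F.1‖ ^ 2 ≤ ‖F.2.1‖ ^ 2 + ‖F.2.2‖ ^ 2 ∧ ∀ N : ℕ, 0 < N → 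
    ‖F.1‖ ^ 2 ≤ 5 / N * (‖F.2.1‖ ^ 2 + ‖F.2.2‖ ^ 2) +
      ∑ i ∈ Finset.range N, ∑ j ∈ Finset.range N, inner ℝ (gcell N i j) F.1 ^ 2 := by
  constructor
  · have hc : IsClosed {F : L2O × L2O × L2O | ‖F.1‖ ^ 2 ≤ ‖F.2.1‖ ^ 2 + ‖F.2.2‖ ^ 2} :=
      isClosed_le (by fun_prop) (by fun_prop)
    exact closure_minimal (fun F hF => (D_key hα₁ hα₂ hF).1) hc hF
  · intro N hN
    have hc : IsClosed {F : L2O × L2O × L2O | ‖F.1‖ ^ 2 ≤ 5 / N * (‖F.2.1‖ ^ 2 + ‖F.2.2‖ ^ 2) +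
      ∑ i ∈ Finset.range N, ∑ j ∈ Finset.range N, inner ℝ (gcell N i j) F.1 ^ 2} :=
      isClosed_le (by fun_prop) (by fun_prop)
    exact closure_minimal (fun F hF => (D_key hα₁ hα₂ hF).2 N hN) hc hF

abbrev K4 := PiLp 2 (fun _ : Fin 4 => L2O)

def pi3 : K4 →L[ℝ] L2O × L2O × L2O :=
  (PiLp.proj 2 (fun _ : Fin 4 => L2O) 0 : K4 →L[ℝ] L2O).prod
    ((PiLp.proj 2 (fun _ : Fin 4 => L2O) 1 : K4 →L[ℝ] L2O).prod
      (PiLp.proj 2 (fun _ : Fin 4 => L2O) 2 : K4 →L[ℝ] L2O))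

def Hs (α₁ α₂ : ℝ) (V : ℝ × ℝ → ℝ) : Submodule ℝ K4 where
  carrier := {F | pi3 F ∈ (Dsub α₁ α₂).topologicalClosure ∧
    F 3 =ᵐ[muO] fun p => Real.sqrt (V p) * F 0 p}
  add_mem' := by
    rintro F G ⟨h0, h1⟩ ⟨g0, g1⟩
    refine ⟨by rw [map_add]; exact add_mem h0 g0, ?_⟩
    filter_upwards [Lp.coeFn_add (F 3) (G 3), Lp.coeFn_add (F 0) (G 0), h1, g1] with p e e' a b
    rw [PiLp.add_apply, PiLp.add_apply, e, e', Pi.add_apply, Pi.add_apply, a, b]; ring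
  zero_mem' := by
    refine ⟨by rw [map_zero]; exact zero_mem _, ?_⟩
    filter_upwards [Lp.coeFn_zero ℝ 2 muO] with p e
    rw [PiLp.zero_apply, PiLp.zero_apply, e]; simp
  smul_mem' := by
    rintro c F ⟨h0, h1⟩
    refine ⟨by rw [map_smul]; exact Submodule.smul_mem _ _ h0, ?_⟩
    filter_upwards [Lp.coeFn_smul c (F 3), Lp.coeFn_smul c (F 0), h1] with p e e' a
    rw [PiLp.smul_apply, PiLp.smul_apply, e, e', Pi.smul_apply, Pi.smul_apply, a]
    simp only [smul_eq_mul]; ring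

theorem sub_ae {F : ℕ → L2O} {G : L2O} (h : Tendsto F atTop (nhds G)) :
    ∃ ns : ℕ → ℕ, StrictMono ns ∧ ∀ᵐ p ∂muO, Tendsto (fun i => F (ns i) p) atTop (nhds (G p)) :=
  (tendstoInMeasure_of_tendsto_Lp h).exists_seq_tendsto_ae

theorem Hs_closed (α₁ α₂ : ℝ) (V : ℝ × ℝ → ℝ) : IsClosed (Hs α₁ α₂ V : Set K4) := by
  apply IsSeqClosed.isClosed
  intro F G hF hG
  refine ⟨?_, ?_⟩
  · refine (Submodule.isClosed_topologicalClosure (Dsub α₁ α₂)).mem_of_tendsto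
      ((pi3.continuous.tendsto G).comp hG) (Eventually.of_forall fun n => (hF n).1)
  · have h0 : Tendsto (fun n => F n 0) atTop (nhds (G 0)) :=
      (((PiLp.proj 2 (fun _ : Fin 4 => L2O) 0 : K4 →L[ℝ] L2O)).continuous.tendsto G).comp hG
    have h3 : Tendsto (fun n => F n 3) atTop (nhds (G 3)) :=
      (((PiLp.proj 2 (fun _ : Fin 4 => L2O) 3 : K4 →L[ℝ] L2O)).continuous.tendsto G).comp hG
    obtain ⟨ns, hns, h0'⟩ := sub_ae h0
    obtain ⟨ms, hms, h3'⟩ := sub_ae (h3.comp hns.tendsto_atTop)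
    have hall : ∀ᵐ p ∂muO, ∀ n, F n 3 p = Real.sqrt (V p) * F n 0 p :=
      ae_all_iff.2 fun n => (hF n).2
    filter_upwards [h0', h3', hall] with p a b c
    refine tendsto_nhds_unique b ?_
    have := (a.comp hms.tendsto_atTop).const_mul (Real.sqrt (V p))
    refine this.congr fun i => ?_
    exact (c _).symm

instance Hs_complete (α₁ α₂ : ℝ) (V : ℝ × ℝ → ℝ) : CompleteSpace (Hs α₁ α₂ V) :=
  (Hs_closed α₁ α₂ V).completeSpace_coe

/-- the element `F` is represented by `u, gx, gy` -/
def RepO (α₁ α₂ : ℝ) (V : ℝ × ℝ → ℝ) (F : K4) (u gx gy : ℝ × ℝ → ℝ) : Prop :=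
  F 0 =ᵐ[muO] u ∧ (F 1 =ᵐ[muO] fun p => p.2 ^ α₁ * gx p) ∧
  (F 2 =ᵐ[muO] fun p => p.1 ^ α₂ * gy p) ∧ (F 3 =ᵐ[muO] fun p => Real.sqrt (V p) * u p)

theorem l2_coe_sum {k : ℕ} (c : Fin k → ℝ) (F : Fin k → L2O) (f : Fin k → ℝ × ℝ → ℝ)
    (h : ∀ i, F i =ᵐ[muO] f i) :
    ((∑ i, c i • F i : L2O) : ℝ × ℝ → ℝ) =ᵐ[muO] fun p => ∑ i, c i * f i p := by
  have h1 : ∀ᵐ p ∂muO, ∀ i, F i p = f i p := ae_all_iff.2 h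
  have h2 : ∀ᵐ p ∂muO, ∀ i, (c i • F i : L2O) p = c i • F i p :=
    ae_all_iff.2 fun i => Lp.coeFn_smul (c i) (F i)
  have h3' : ∀ G : Fin k → L2O, ((∑ i, G i : L2O) : ℝ × ℝ → ℝ) =ᵐ[muO] fun p => ∑ i, G i p := by
    intro G
    induction (Finset.univ : Finset (Fin k)) using Finset.induction_on with
    | empty => 
      filter_upwards [Lp.coeFn_zero ℝ 2 muO] with p e
      simp only [Finset.sum_empty]; exact e
    | insert a s ha ih =>
      filter_upwards [ih, Lp.coeFn_add (G a) (∑ i ∈ s, G i)] with p e e'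
      rw [Finset.sum_insert ha, e', Pi.add_apply, e, Finset.sum_insert ha]
  filter_upwards [h1, h2, h3' fun i => c i • F i] with p a b e
  rw [e]
  refine Finset.sum_congr rfl fun i _ => ?_
  rw [b, a]; rfl

theorem RepO_sum {α₁ α₂ : ℝ} {V : ℝ × ℝ → ℝ} {k : ℕ} (c : Fin k → ℝ) (F : Fin k → K4)
    (u gx gy : Fin k → ℝ × ℝ → ℝ) (h : ∀ i, RepO α₁ α₂ V (F i) (u i) (gx i) (gy i)) :
    RepO α₁ α₂ V (∑ i, c i • F i) (fun p => ∑ i, c i * u i p) (fun p => ∑ i, c i * gx i p)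
      (fun p => ∑ i, c i * gy i p) := by
  have e : ∀ j, (∑ i, c i • F i : K4) j = ∑ i, c i • F i j := by
    intro j
    simp
  refine ⟨?_, ?_, ?_, ?_⟩
  · rw [e]; exact l2_coe_sum c _ _ fun i => (h i).1
  · rw [e]
    refine (l2_coe_sum c _ _ fun i => (h i).2.1).trans (Eventually.of_forall fun p => ?_)
    simp only [Finset.mul_sum]; exact Finset.sum_congr rfl fun i _ => by ring
  · rw [e]
    refine (l2_coe_sum c _ _ fun i => (h i).2.2.1).trans (Eventually.of_forall fun p => ?_)
    simp only [Finset.mul_sum]; exact Finset.sum_congr rfl fun i _ => by ring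
  · rw [e]
    refine (l2_coe_sum c _ _ fun i => (h i).2.2.2).trans (Eventually.of_forall fun p => ?_)
    simp only [Finset.mul_sum]; exact Finset.sum_congr rfl fun i _ => by ring

theorem l2_int (F G : L2O) {f g : ℝ × ℝ → ℝ} (hF : F =ᵐ[muO] f) (hG : G =ᵐ[muO] g) :
    Integrable (fun p => f p * g p) muO :=
  ((Lp.memLp F).ae_eq hF).integrable_mul ((Lp.memLp G).ae_eq hG)

theorem RepO_inner {α₁ α₂ : ℝ} {V : ℝ × ℝ → ℝ} (hV : ∀ᵐ p ∂muO, 0 ≤ V p) {F G : K4}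
    {u gx gy v hx hy : ℝ × ℝ → ℝ} (h : RepO α₁ α₂ V F u gx gy) (g : RepO α₁ α₂ V G v hx hy) :
    inner ℝ F G = (∫ p in Omega, u p * v p) + aForm α₁ α₂ V u gx gy v hx hy := by
  rw [PiLp.inner_apply, Fin.sum_univ_four, l2_inner _ _ h.1 g.1, l2_inner _ _ h.2.1 g.2.1,
    l2_inner _ _ h.2.2.1 g.2.2.1, l2_inner _ _ h.2.2.2 g.2.2.2]
  unfold aForm
  have e : ∀ᵐ p ∂muO, (Real.sqrt (V p) * u p) * (Real.sqrt (V p) * v p) = V p * u p * v p := by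
    filter_upwards [hV] with p hp
    have := Real.mul_self_sqrt hp
    calc _ = (Real.sqrt (V p) * Real.sqrt (V p)) * u p * v p := by ring
      _ = _ := by rw [this]
  have i1 := l2_int _ _ h.2.1 g.2.1
  have i2 := l2_int _ _ h.2.2.1 g.2.2.1
  have i3 := (l2_int _ _ h.2.2.2 g.2.2.2).congr e
  have i12 : Integrable (fun p => (p.2 ^ α₁ * gx p) * (p.2 ^ α₁ * hx p) +
    (p.1 ^ α₂ * gy p) * (p.1 ^ α₂ * hy p)) muO := i1.add i2
  rw [integral_add i12 i3, integral_add i1 i2, integral_congr_ae e]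
  ring

theorem h1norm_eq {α₁ α₂ : ℝ} {A B : L2O × L2O × L2O} {u gx gy φ : ℝ × ℝ → ℝ}
    (a0 : A.1 =ᵐ[muO] u) (a1 : A.2.1 =ᵐ[muO] fun p => p.2 ^ α₁ * gx p)
    (a2 : A.2.2 =ᵐ[muO] fun p => p.1 ^ α₂ * gy p)
    (b0 : B.1 =ᵐ[muO] φ) (b1 : B.2.1 =ᵐ[muO] tw1 α₁ φ) (b2 : B.2.2 =ᵐ[muO] tw2 α₂ φ) :
    H1Norm α₁ α₂ (fun p => u p - φ p) (fun p => gx p - pdx φ p) (fun p => gy p - pdy φ p) =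
      Real.sqrt (‖A.1 - B.1‖ ^ 2 + ‖A.2.1 - B.2.1‖ ^ 2 + ‖A.2.2 - B.2.2‖ ^ 2) := by
  unfold H1Norm
  rw [l2_norm (A.1 - B.1) (f := fun p => u p - φ p),
    l2_norm (A.2.1 - B.2.1) (f := fun p => p.2 ^ α₁ * (gx p - pdx φ p)),
    l2_norm (A.2.2 - B.2.2) (f := fun p => p.1 ^ α₂ * (gy p - pdy φ p))]
  · filter_upwards [Lp.coeFn_sub A.2.2 B.2.2, a2, b2] with p e a b
    rw [e, Pi.sub_apply, a, b, tw2]; ring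
  · filter_upwards [Lp.coeFn_sub A.2.1 B.2.1, a1, b1] with p e a b
    rw [e, Pi.sub_apply, a, b, tw1]; ring
  · filter_upwards [Lp.coeFn_sub A.1 B.1, a0, b0] with p e a b
    rw [e, Pi.sub_apply, a, b]

theorem mk_D {α₁ α₂ : ℝ} (hα₁ : 0 ≤ α₁) (hα₂ : 0 ≤ α₂) {φ : ℝ × ℝ → ℝ} (hφ : IsTest φ) :
    ∃ B : L2O × L2O × L2O, B.1 =ᵐ[muO] φ ∧ B.2.1 =ᵐ[muO] tw1 α₁ φ ∧ B.2.2 =ᵐ[muO] tw2 α₂ φ :=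
  ⟨((test_memLp hφ).toLp _, (tw1_memLp hα₁ hφ).toLp _, (tw2_memLp hα₂ hφ).toLp _),
    MemLp.coeFn_toLp (test_memLp hφ), MemLp.coeFn_toLp (tw1_memLp hα₁ hφ),
    MemLp.coeFn_toLp (tw2_memLp hα₂ hφ)⟩

theorem exists_rep {α₁ α₂ : ℝ} {V u gx gy : ℝ × ℝ → ℝ} (hVm : AEStronglyMeasurable V muO)
    (hV : ∀ᵐ p ∂muO, 0 ≤ V p) (h0 : MemLp u 2 muO)
    (h1 : MemLp (fun p => p.2 ^ α₁ * gx p) 2 muO) (h2 : MemLp (fun p => p.1 ^ α₂ * gy p) 2 muO)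
    (h3 : IntegrableOn (fun p => V p * (u p) ^ 2) Omega volume) :
    ∃ F : K4, RepO α₁ α₂ V F u gx gy := by
  have m3 : MemLp (fun p => Real.sqrt (V p) * u p) 2 muO := by
    have hm : AEStronglyMeasurable (fun p => Real.sqrt (V p) * u p) muO :=
      (Real.continuous_sqrt.comp_aestronglyMeasurable hVm).mul h0.1
    rw [memLp_two_iff_integrable_sq hm]
    refine Integrable.congr h3 ?_
    filter_upwards [hV] with p hp
    rw [mul_pow, Real.sq_sqrt hp]
  refine ⟨WithLp.toLp 2 ![h0.toLp _, h1.toLp _, h2.toLp _, m3.toLp _], ?_, ?_, ?_, ?_⟩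
  · exact MemLp.coeFn_toLp h0
  · exact MemLp.coeFn_toLp h1
  · exact MemLp.coeFn_toLp h2
  · exact MemLp.coeFn_toLp m3

theorem pi3_apply (F : K4) : pi3 F = (F 0, F 1, F 2) := rfl

/-- part (A) -/
theorem mem_of_MemH0 {α₁ α₂ : ℝ} (hα₁ : 0 ≤ α₁) (hα₂ : 0 ≤ α₂) {V u gx gy : ℝ × ℝ → ℝ}
    (hVm : AEStronglyMeasurable V muO)
    (hV : ∀ᵐ p ∂muO, 0 ≤ V p) (h : MemH0 α₁ α₂ V u gx gy) :
    ∃ F ∈ Hs α₁ α₂ V, RepO α₁ α₂ V F u gx gy := by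
  obtain ⟨F, hF⟩ := exists_rep hVm hV h.1.1.memL2 h.1.1.wgx h.1.1.wgy h.2
  refine ⟨F, ⟨?_, ?_⟩, hF⟩
  · rw [← SetLike.mem_coe, Submodule.topologicalClosure_coe, Metric.mem_closure_iff]
    intro ε hε
    obtain ⟨φ, hφ, hlt⟩ := h.1.2 ε hε
    obtain ⟨B, b0, b1, b2⟩ := mk_D hα₁ hα₂ hφ
    refine ⟨B, ⟨φ, hφ, b0, b1, b2⟩, lt_of_le_of_lt ?_ hlt⟩
    rw [h1norm_eq (A := pi3 F) hF.1 hF.2.1 hF.2.2.1 b0 b1 b2]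
    apply Real.le_sqrt_of_sq_le
    have p0 := sq_nonneg ‖(pi3 F).1 - B.1‖
    have p1 := sq_nonneg ‖(pi3 F).2.1 - B.2.1‖
    have p2 := sq_nonneg ‖(pi3 F).2.2 - B.2.2‖
    rw [Prod.dist_eq, Prod.dist_eq, dist_eq_norm, dist_eq_norm, dist_eq_norm]
    rcases max_cases ‖(pi3 F).1 - B.1‖ (max ‖(pi3 F).2.1 - B.2.1‖ ‖(pi3 F).2.2 - B.2.2‖) with ⟨e, _⟩ | ⟨e, _⟩
    · rw [e]; linarith
    · rw [e]
      rcases max_cases ‖(pi3 F).2.1 - B.2.1‖ ‖(pi3 F).2.2 - B.2.2‖ with ⟨e, _⟩ | ⟨e, _⟩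
      · rw [e]; linarith
      · rw [e]; linarith
  · filter_upwards [hF.1, hF.2.2.2] with p a b
    rw [a, b]

theorem ibp {φ ψ : ℝ × ℝ → ℝ} (hφ : IsTest φ) (hψ : IsTest ψ) (v : ℝ × ℝ) :
    ∫ p in Omega, φ p * fderiv ℝ ψ p v = - ∫ p in Omega, fderiv ℝ φ p v * ψ p := by
  rw [setIntegral_eq_integral_of_forall_compl_eq_zero (fun p hp => by rw [test_zero hφ hp, zero_mul]),
    setIntegral_eq_integral_of_forall_compl_eq_zero (fun p hp => by rw [test_zero hψ hp, mul_zero])]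
  have c1 := hφ.1.continuous
  have c2 := hψ.1.continuous
  have d1 : Continuous fun p => fderiv ℝ φ p v := (test_cont_fderiv hφ).clm_apply continuous_const
  have d2 : Continuous fun p => fderiv ℝ ψ p v := (test_cont_fderiv hψ).clm_apply continuous_const
  apply integral_mul_fderiv_eq_neg_fderiv_mul_of_integrable
  · exact (d1.mul c2).integrable_of_hasCompactSupport hψ.2.1.mul_left
  · exact (c1.mul d2).integrable_of_hasCompactSupport hφ.2.1.mul_right
  · exact (c1.mul c2).integrable_of_hasCompactSupport hφ.2.1.mul_right
  · exact fun p _ => test_diff hφ p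
  · exact fun p _ => test_diff hψ p

theorem wcont {w : ℝ × ℝ → ℝ} (hw : ContinuousOn w Omega) {ψ : ℝ × ℝ → ℝ} (hψ : IsTest ψ) :
    MemLp (fun p => w p * ψ p) 2 muO := by
  have hs : tsupport (fun p => w p * ψ p) ⊆ Omega := tsupport_mul_subset_right.trans hψ.2.2
  have hc : Continuous (fun p => w p * ψ p) :=
    (hw.mul hψ.1.continuous.continuousOn).continuous_of_tsupport_subset isOpen_Omega hs
  exact hc.memLp_of_hasCompactSupport hψ.2.1.mul_left

/-- general closure argument for the weak derivatives -/
theorem weak_closure {D : Set (L2O × L2O × L2O)} {q : L2O × L2O × L2O → L2O} (hq : Continuous q)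
    {a b : L2O} (h : ∀ F ∈ D, inner ℝ F.1 a = - inner ℝ (q F) b) {F : L2O × L2O × L2O}
    (hF : F ∈ closure D) : inner ℝ F.1 a = - inner ℝ (q F) b := by
  have hc : IsClosed {F : L2O × L2O × L2O | inner ℝ F.1 a = - inner ℝ (q F) b} :=
    isClosed_eq (continuous_fst.inner continuous_const) (hq.inner continuous_const).neg
  exact closure_minimal h hc hF

theorem w1cont (α : ℝ) : ContinuousOn (fun p : ℝ × ℝ => p.2 ^ (-α)) Omega :=
  continuousOn_snd.rpow_const fun _ hp => Or.inl hp.2.1.ne'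

theorem w2cont (α : ℝ) : ContinuousOn (fun p : ℝ × ℝ => p.1 ^ (-α)) Omega :=
  continuousOn_fst.rpow_const fun _ hp => Or.inl hp.1.1.ne'

theorem rpow_cancel {y : ℝ} (hy : 0 < y) (α : ℝ) : y ^ α * y ^ (-α) = 1 := by
  rw [← Real.rpow_add hy, add_neg_cancel, Real.rpow_zero]

theorem ae_Omega : ∀ᵐ p ∂muO, p ∈ Omega := ae_restrict_mem meas_Omega

theorem weakX_closure {α₁ α₂ : ℝ} {F : L2O × L2O × L2O}
    (hF : F ∈ (Dsub α₁ α₂).topologicalClosure) {ψ : ℝ × ℝ → ℝ} (hψ : IsTest ψ) :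
    ∫ p in Omega, F.1 p * pdx ψ p = - ∫ p in Omega, (p.2 ^ (-α₁) * F.2.1 p) * ψ p := by
  have key := weak_closure (D := (Dsub α₁ α₂ : Set (L2O × L2O × L2O))) (q := fun F => F.2.1)
    (by fun_prop) (a := (pdx_memLp hψ).toLp _) (b := (wcont (w1cont α₁) hψ).toLp _) (by
      rintro G ⟨φ, hφ, g0, g1, g2⟩
      rw [l2_inner _ _ g0 (MemLp.coeFn_toLp _), l2_inner _ _ g1 (MemLp.coeFn_toLp _)]
      refine (ibp hφ hψ (1, 0)).trans ?_
      congr 1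
      apply integral_congr_ae
      filter_upwards [ae_Omega] with p hp
      have := rpow_cancel hp.2.1 α₁
      simp only [tw1, pdx]
      linear_combination (- (fderiv ℝ φ p) (1, 0) * ψ p) * this) hF
  rw [l2_inner _ _ (ae_eq_refl _) (MemLp.coeFn_toLp _), l2_inner _ _ (ae_eq_refl _) (MemLp.coeFn_toLp _)] at key
  rw [key]
  congr 2
  ext p; ring

theorem weakY_closure {α₁ α₂ : ℝ} {F : L2O × L2O × L2O}
    (hF : F ∈ (Dsub α₁ α₂).topologicalClosure) {ψ : ℝ × ℝ → ℝ} (hψ : IsTest ψ) :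
    ∫ p in Omega, F.1 p * pdy ψ p = - ∫ p in Omega, (p.1 ^ (-α₂) * F.2.2 p) * ψ p := by
  have key := weak_closure (D := (Dsub α₁ α₂ : Set (L2O × L2O × L2O))) (q := fun F => F.2.2)
    (by fun_prop) (a := (pdy_memLp hψ).toLp _) (b := (wcont (w2cont α₂) hψ).toLp _) (by
      rintro G ⟨φ, hφ, g0, g1, g2⟩
      rw [l2_inner _ _ g0 (MemLp.coeFn_toLp _), l2_inner _ _ g2 (MemLp.coeFn_toLp _)]
      refine (ibp hφ hψ (0, 1)).trans ?_
      congr 1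
      apply integral_congr_ae
      filter_upwards [ae_Omega] with p hp
      have := rpow_cancel hp.1.1 α₂
      simp only [tw2, pdy]
      linear_combination (- (fderiv ℝ φ p) (0, 1) * ψ p) * this) hF
  rw [l2_inner _ _ (ae_eq_refl _) (MemLp.coeFn_toLp _), l2_inner _ _ (ae_eq_refl _) (MemLp.coeFn_toLp _)] at key
  rw [key]
  congr 2
  ext p; ring

theorem locint (F : L2O) : LocallyIntegrableOn F Omega volume := by
  have : IntegrableOn F Omega volume := (Lp.memLp F).integrable (by norm_num)
  exact this.locallyIntegrableOn

theorem locint_mul {w : ℝ × ℝ → ℝ} (hw : ContinuousOn w Omega) (F : L2O) :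
    LocallyIntegrableOn (fun p => w p * F p) Omega volume :=
  (locint F).continuousOn_mul hw isOpen_Omega.isLocallyClosed

/-- part (B) -/
theorem MemH0_of_mem {α₁ α₂ : ℝ} {V : ℝ × ℝ → ℝ}
    (hV : ∀ᵐ p ∂muO, 0 ≤ V p) {F : K4} (hF : F ∈ Hs α₁ α₂ V) :
    ∃ u gx gy, MemH0 α₁ α₂ V u gx gy ∧ RepO α₁ α₂ V F u gx gy := by
  have e1 : F 1 =ᵐ[muO] fun p => p.2 ^ α₁ * (p.2 ^ (-α₁) * F 1 p) := by
    filter_upwards [ae_Omega] with p hp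
    rw [← mul_assoc, rpow_cancel hp.2.1, one_mul]
  have e2 : F 2 =ᵐ[muO] fun p => p.1 ^ α₂ * (p.1 ^ (-α₂) * F 2 p) := by
    filter_upwards [ae_Omega] with p hp
    rw [← mul_assoc, rpow_cancel hp.1.1, one_mul]
  refine ⟨F 0, fun p => p.2 ^ (-α₁) * F 1 p, fun p => p.1 ^ (-α₂) * F 2 p, ⟨⟨⟨Lp.memLp _, ?_, ?_, ?_, ?_⟩, ?_⟩, ?_⟩, ?_⟩
  · exact ⟨locint _, locint_mul (w1cont _) _, fun ψ hψ => weakX_closure hF.1 hψ⟩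
  · exact ⟨locint _, locint_mul (w2cont _) _, fun ψ hψ => weakY_closure hF.1 hψ⟩
  · exact (Lp.memLp (F 1)).ae_eq e1
  · exact (Lp.memLp (F 2)).ae_eq e2
  · intro ε hε
    have hc := hF.1
    rw [← SetLike.mem_coe, Submodule.topologicalClosure_coe, Metric.mem_closure_iff] at hc
    obtain ⟨B, ⟨φ, hφ, b0, b1, b2⟩, hB⟩ := hc (ε / 2) (by positivity)
    refine ⟨φ, hφ, ?_⟩
    refine lt_of_eq_of_lt (h1norm_eq (A := pi3 F) (gx := fun p => p.2 ^ (-α₁) * F 1 p)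
      (gy := fun p => p.1 ^ (-α₂) * F 2 p) (ae_eq_refl _) e1 e2 b0 b1 b2) ?_
    rw [Prod.dist_eq, Prod.dist_eq, dist_eq_norm, dist_eq_norm, dist_eq_norm, max_lt_iff, max_lt_iff] at hB
    obtain ⟨x0, x1, x2⟩ := hB
    rw [Real.sqrt_lt' hε]
    have p0 := norm_nonneg ((pi3 F).1 - B.1)
    have p1 := norm_nonneg ((pi3 F).2.1 - B.2.1)
    have p2 := norm_nonneg ((pi3 F).2.2 - B.2.2)
    nlinarith
  · have := l2_int _ _ hF.2 hF.2
    refine this.congr ?_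
    filter_upwards [hV] with p hp
    have := Real.mul_self_sqrt hp
    linear_combination (F 0 p) ^ 2 * this
  · exact ⟨ae_eq_refl _, e1, e2, hF.2⟩

theorem test_mem {α₁ α₂ : ℝ} (hα₁ : 0 ≤ α₁) (hα₂ : 0 ≤ α₂) {V : ℝ × ℝ → ℝ}
    (hVi : Integrable V muO)
    (hV : ∀ᵐ p ∂muO, 0 ≤ V p) {φ : ℝ × ℝ → ℝ} (hφ : IsTest φ) :
    ∃ F ∈ Hs α₁ α₂ V, F 0 =ᵐ[muO] φ := by
  obtain ⟨C, hC⟩ := hφ.2.1.exists_bound_of_continuous hφ.1.continuous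
  have hi : Integrable (fun p => V p * (φ p) ^ 2) muO := by
    refine Integrable.mul_bdd (c := C ^ 2) hVi ((hφ.1.continuous.pow 2).aestronglyMeasurable) (Eventually.of_forall fun p => ?_)
    rw [norm_pow]; exact pow_le_pow_left₀ (norm_nonneg _) (hC p) 2
  obtain ⟨F, hF⟩ := exists_rep hVi.1 hV (test_memLp hφ) (tw1_memLp hα₁ hφ) (tw2_memLp hα₂ hφ) hi
  refine ⟨F, ⟨?_, ?_⟩, hF.1⟩
  · exact Submodule.le_topologicalClosure _ ⟨φ, hφ, hF.1, hF.2.1, hF.2.2.1⟩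
  · filter_upwards [hF.1, hF.2.2.2] with p a b
    rw [a, b]

theorem l2_zero_of_test (f : L2O) (h : ∀ φ, IsTest φ → ∫ p in Omega, f p * φ p = 0) : f = 0 := by
  have := isOpen_Omega.ae_eq_zero_of_integral_contDiff_smul_eq_zero (locint f) (by
    intro g g1 g2 g3
    have hg : IsTest g := ⟨g1, g2, g3⟩
    rw [← h g hg, setIntegral_eq_integral_of_forall_compl_eq_zero (fun p hp => by rw [test_zero hg hp, mul_zero])]
    congr 1; ext p; simp [mul_comm])
  rw [Lp.eq_zero_iff_ae_eq_zero]
  exact (ae_restrict_iff' meas_Omega).2 this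

theorem l2_inf : ¬ FiniteDimensional ℝ L2O := by
  intro hfin
  let s : ℕ → Set (ℝ × ℝ) := fun n => Ioo (1 / (n + 2) : ℝ) (1 / (n + 1)) ×ˢ Ioo (0:ℝ) 1
  have hsm : ∀ n, MeasurableSet (s n) := fun n => measurableSet_Ioo.prod measurableSet_Ioo
  have hlt : ∀ n : ℕ, (1 / (n + 2) : ℝ) < 1 / (n + 1) := fun n =>
    one_div_lt_one_div_of_lt (by positivity) (by linarith)
  have hsub : ∀ n, s n ⊆ Omega := fun n => by
    refine Set.prod_mono (Ioo_subset_Ioo (by positivity) ?_) le_rfl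
    rw [div_le_one (by positivity)]
    have : (0:ℝ) ≤ n := n.cast_nonneg
    linarith
  have hpos : ∀ n, muO (s n) ≠ 0 := fun n => by
    rw [Measure.restrict_apply (hsm n), inter_eq_left.2 (hsub n)]
    have ho : IsOpen (s n) := isOpen_Ioo.prod isOpen_Ioo
    exact (ho.measure_pos volume ((nonempty_Ioo.2 (hlt n)).prod (nonempty_Ioo.2 zero_lt_one))).ne'
  let e : ℕ → L2O := fun n => indicatorConstLp 2 (hsm n) (measure_ne_top muO _) (1:ℝ)
  have hdis : ∀ m n, m < n → Disjoint (s m) (s n) := by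
    intro m n hmn
    rw [Set.disjoint_left]
    rintro p ⟨hp, _⟩ ⟨hq, _⟩
    have h1 : (1 / (n + 1) : ℝ) ≤ 1 / (m + 2) := by
      apply one_div_le_one_div_of_le (by positivity)
      have : ((m + 1 : ℕ) : ℝ) ≤ n := by exact_mod_cast hmn
      push_cast at this; linarith
    linarith [hp.1, hq.2]
  have hdis' : ∀ m n, m ≠ n → Disjoint (s m) (s n) := fun m n h => by
    rcases lt_or_gt_of_ne h with h | h
    · exact hdis m n h
    · exact (hdis n m h).symm
  have hli : LinearIndependent ℝ e := by
    apply linearIndependent_of_ne_zero_of_inner_eq_zero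
    · intro n hn
      have := norm_indicatorConstLp (p := 2) (hs := hsm n) (hμs := measure_ne_top muO (s n)) (c := (1:ℝ)) (by norm_num) (by norm_num)
      rw [show indicatorConstLp 2 (hsm n) (measure_ne_top muO _) (1:ℝ) = 0 from hn, norm_zero, norm_one, one_mul] at this
      have h2 : 0 < muO.real (s n) := ENNReal.toReal_pos (hpos n) (measure_ne_top _ _)
      exact (Real.rpow_pos_of_pos h2 _).ne this
    · intro m n hmn
      rw [L2.inner_indicatorConstLp_one]
      refine (integral_congr_ae (g := fun _ => (0:ℝ)) ?_).trans (integral_zero _ _)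
      have h1 : (e n : ℝ × ℝ → ℝ) =ᵐ[muO] (s n).indicator fun _ => (1:ℝ) := indicatorConstLp_coeFn
      filter_upwards [ae_restrict_of_ae h1, ae_restrict_mem (hsm m)] with p a b
      refine a.trans ?_
      rw [indicator_of_notMem]
      exact Set.disjoint_left.1 (hdis' m n hmn) b
  have := hli.finite
  exact not_finite ℕ

def Jm (α₁ α₂ : ℝ) (V : ℝ × ℝ → ℝ) : Hs α₁ α₂ V →L[ℝ] L2O :=
  (PiLp.proj 2 (fun _ : Fin 4 => L2O) 0 : K4 →L[ℝ] L2O) ∘L (Hs α₁ α₂ V).subtypeL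

theorem Jm_apply {α₁ α₂ : ℝ} {V : ℝ × ℝ → ℝ} (F : Hs α₁ α₂ V) : Jm α₁ α₂ V F = (F : K4) 0 := rfl

theorem K4_norm (F : K4) : ‖F‖ ^ 2 = ‖F 0‖ ^ 2 + ‖F 1‖ ^ 2 + ‖F 2‖ ^ 2 + ‖F 3‖ ^ 2 := by
  rw [PiLp.norm_sq_eq_of_L2, Fin.sum_univ_four]

theorem Jm_key {α₁ α₂ : ℝ} (hα₁ : α₁ ∈ Ioo (0:ℝ) (1/2)) (hα₂ : α₂ ∈ Ioo (0:ℝ) (1/2))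
    (V : ℝ × ℝ → ℝ) : ∀ ε > 0, ∃ (m : ℕ) (g : Fin m → L2O), ∀ v : Hs α₁ α₂ V,
      ‖Jm α₁ α₂ V v‖ ^ 2 ≤ ε * ‖v‖ ^ 2 + ∑ j, inner ℝ (g j) (Jm α₁ α₂ V v) ^ 2 := by
  intro ε hε
  obtain ⟨N, hN⟩ := exists_nat_gt (5 / ε)
  have hN0 : (0:ℝ) < N := lt_trans (by positivity) hN
  have hN1 : 5 / (N:ℝ) ≤ ε := by
    rw [div_le_iff₀ hN0]
    rw [div_lt_iff₀ hε] at hN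
    linarith
  refine ⟨N * N, fun q => gcell N (finProdFinEquiv.symm q).1 (finProdFinEquiv.symm q).2, fun v => ?_⟩
  have key := (D_key' hα₁ hα₂ v.2.1).2 N (by exact_mod_cast hN0)
  have e : ∑ q : Fin (N * N), inner ℝ (gcell N (finProdFinEquiv.symm q).1 (finProdFinEquiv.symm q).2)
      (Jm α₁ α₂ V v) ^ 2 = ∑ i ∈ Finset.range N, ∑ j ∈ Finset.range N,
        inner ℝ (gcell N i j) (Jm α₁ α₂ V v) ^ 2 := by
    rw [Equiv.sum_comp finProdFinEquiv.symm (fun q : Fin N × Fin N => inner ℝ (gcell N q.1 q.2) (Jm α₁ α₂ V v) ^ 2),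
      Fintype.sum_prod_type, Finset.sum_range]
    refine Finset.sum_congr rfl fun i _ => ?_
    rw [Finset.sum_range]
  rw [e]
  refine key.trans (add_le_add ?_ le_rfl)
  have hn : ‖v‖ ^ 2 = ‖(v : K4) 0‖ ^ 2 + ‖(v : K4) 1‖ ^ 2 + ‖(v : K4) 2‖ ^ 2 + ‖(v : K4) 3‖ ^ 2 :=
    K4_norm (v : K4)
  have hle : ‖(pi3 (v : K4)).2.1‖ ^ 2 + ‖(pi3 (v : K4)).2.2‖ ^ 2 ≤ ‖v‖ ^ 2 := by
    rw [hn, pi3_apply]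
    have := sq_nonneg ‖(v : K4) 0‖
    have := sq_nonneg ‖(v : K4) 3‖
    dsimp only
    linarith
  exact mul_le_mul hN1 hle (by positivity) hε.le

theorem RepO_norm {α₁ α₂ : ℝ} {V : ℝ × ℝ → ℝ} (hV : ∀ᵐ p ∂muO, 0 ≤ V p) {F : K4}
    {u gx gy : ℝ × ℝ → ℝ} (h : RepO α₁ α₂ V F u gx gy) :
    aForm α₁ α₂ V u gx gy u gx gy = ‖F‖ ^ 2 - ‖F 0‖ ^ 2 := by
  rw [← real_inner_self_eq_norm_sq, RepO_inner hV h h, l2_norm _ h.1]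
  simp only [pow_two]; ring

theorem ray_eq {α₁ α₂ : ℝ} {V : ℝ × ℝ → ℝ} (hV : ∀ᵐ p ∂muO, 0 ≤ V p) {k : ℕ}
    (Φ : Fin k → Hs α₁ α₂ V) (φ φx φy : Fin k → ℝ × ℝ → ℝ)
    (h : ∀ i, RepO α₁ α₂ V (Φ i) (φ i) (φx i) (φy i)) :
    rayleighSup α₁ α₂ V φ φx φy = sSup {s | ∃ c : Fin k → ℝ,
      ‖Jm α₁ α₂ V (∑ i, c i • Φ i)‖ = 1 ∧ s = ‖∑ i, c i • Φ i‖ ^ 2 - 1} := by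
  unfold rayleighSup
  congr 1
  ext s
  refine exists_congr fun c => ?_
  have hr := RepO_sum c (fun i => (Φ i : K4)) φ φx φy h
  have e : ((∑ i, c i • Φ i : Hs α₁ α₂ V) : K4) = ∑ i, c i • (Φ i : K4) := by simp
  rw [← e] at hr
  have h1 : ‖Jm α₁ α₂ V (∑ i, c i • Φ i)‖ ^ 2 = ∫ p in Omega, (∑ i, c i * φ i p) ^ 2 :=
    l2_norm _ hr.1
  have h2 := RepO_norm hV hr
  rw [← h1, h2]
  have h3 : ‖Jm α₁ α₂ V (∑ i, c i • Φ i)‖ ^ 2 = 1 ↔ ‖Jm α₁ α₂ V (∑ i, c i • Φ i)‖ = 1 := by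
    rw [pow_eq_one_iff_of_nonneg (norm_nonneg _) two_ne_zero]
  rw [h3]
  refine and_congr_right fun h4 => ?_
  rw [← Jm_apply, h4, one_pow]
  rfl

/-- Spectral theorem for the sub-elliptic operator with potential
`V ∈ S_p`, `1 < p < ∞`: there is a nondecreasing sequence of positive eigenvalues
`λ₁ ≤ λ₂ ≤ ⋯ → ∞` with eigenfunctions `w_k ∈ H₀(Ω)` forming an orthonormal basis of
`L²(Ω)`, and the eigenvalues obey the min-max characterization. (Here `lam k` is the
`(k+1)`-st eigenvalue `λ_{k+1}`.) -/
theorem spectral_theorem (α₁ α₂ ppow M : ℝ)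
    (hα₁ : α₁ ∈ Ioo (0:ℝ) (1/2)) (hα₂ : α₂ ∈ Ioo (0:ℝ) (1/2))
    (hp : 1 < ppow) (hM : 0 < M) (V : ℝ × ℝ → ℝ) (hV : MemSp ppow M V) :
    ∃ (lam : ℕ → ℝ) (w wx wy : ℕ → ℝ × ℝ → ℝ),
      0 < lam 0 ∧ Monotone lam ∧ Tendsto lam atTop atTop ∧
      (∀ k, MemH0 α₁ α₂ V (w k) (wx k) (wy k)) ∧
      (∀ j k : ℕ, (∫ p in Omega, w j p * w k p) = if j = k then 1 else 0) ∧
      (∀ f : ℝ × ℝ → ℝ, MemLp f 2 (volume.restrict Omega) →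
        (∀ k, (∫ p in Omega, f p * w k p) = 0) →
        (∀ᵐ p ∂(volume.restrict Omega), f p = 0)) ∧
      (∀ k, ∀ v hx hy : ℝ × ℝ → ℝ, MemH0 α₁ α₂ V v hx hy →
        aForm α₁ α₂ V (w k) (wx k) (wy k) v hx hy = lam k * ∫ p in Omega, w k p * v p) ∧
      (∀ k : ℕ, lam k = lamk α₁ α₂ V (k + 1)) := by
  have h1 : 0 ≤ α₁ := hα₁.1.le
  have h2 : 0 ≤ α₂ := hα₂.1.le
  obtain ⟨hVL, hVn, -⟩ := hV
  have hVi : Integrable V muO := hVL.integrable (by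
    rw [← ENNReal.ofReal_one]; exact ENNReal.ofReal_le_ofReal hp.le)
  have hdense : ∀ f : L2O, (∀ v, inner ℝ f (Jm α₁ α₂ V v) = 0) → f = 0 := by
    intro f hf
    apply l2_zero_of_test
    intro φ hφ
    obtain ⟨F, hF, hF0⟩ := test_mem h1 h2 hVi hVn hφ
    rw [← l2_inner f (F 0) (ae_eq_refl _) hF0]
    exact hf ⟨F, hF⟩
  obtain ⟨μ, w, hμ, hanti, hlim, hon, heig, hcomp, hbd⟩ :=
    abs_seq (Jm α₁ α₂ V) l2_inf hdense (Jm_key hα₁ hα₂ V)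
  choose u gx gy hmem hrep using fun k => MemH0_of_mem hVn (w k).2
  have hsub : ∀ k, (μ 0)⁻¹ ≤ (μ k)⁻¹ := fun k => inv_anti₀ (hμ k) (hanti (Nat.zero_le k))
  refine ⟨fun k => (μ k)⁻¹ - 1, u, gx, gy, ?_, ?_, ?_, hmem, ?_, ?_, ?_, ?_⟩
  · have e1 : ‖Jm α₁ α₂ V (w 0)‖ ^ 2 = 1 := by
      rw [← real_inner_self_eq_norm_sq, hon]; simp
    have e2 := heig 0 (w 0)
    rw [hon, if_pos rfl, real_inner_self_eq_norm_sq] at e2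
    have e3 : (μ 0)⁻¹ = ‖w 0‖ ^ 2 := (eq_inv_of_mul_eq_one_right e2.symm).symm
    have e4 : ‖w 0‖ ^ 2 = _ := K4_norm (w 0 : K4)
    have e5 := (D_key' hα₁ hα₂ (w 0).2.1).1
    rw [pi3_apply] at e5
    rw [Jm_apply] at e1
    have := sq_nonneg ‖(w 0 : K4) 3‖
    dsimp only at e5 ⊢
    rw [e3, e4]
    linarith
  · intro i j hij
    have := inv_anti₀ (hμ j) (hanti hij)
    dsimp only
    linarith
  · have : Tendsto (fun k => (μ k)⁻¹) atTop atTop :=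
      (tendsto_nhdsWithin_iff.2 ⟨hlim, Eventually.of_forall hμ⟩).inv_tendsto_nhdsGT_zero
    exact tendsto_atTop_add_const_right _ (-1) this
  · intro j k
    rw [← l2_inner _ _ (hrep j).1 (hrep k).1]
    exact hon j k
  · intro f hf h0
    have : hf.toLp f = 0 := by
      apply hcomp
      intro k
      rw [Jm_apply, l2_inner _ _ (MemLp.coeFn_toLp hf) (hrep k).1]
      exact h0 k
    have e := MemLp.coeFn_toLp hf
    rw [this] at e
    filter_upwards [e, Lp.coeFn_zero ℝ 2 muO] with p a b
    rw [← a, b]; rfl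
  · intro k v hx hy hv
    obtain ⟨F, hF, hFr⟩ := mem_of_MemH0 h1 h2 hVi.1 hVn hv
    have e1 := RepO_inner hVn (hrep k) hFr
    have e2 := heig k ⟨F, hF⟩
    have e3 : inner ℝ (Jm α₁ α₂ V (w k)) (Jm α₁ α₂ V ⟨F, hF⟩) = ∫ p in Omega, u k p * v p :=
      l2_inner _ _ (hrep k).1 hFr.1
    have e4 : inner ℝ (w k) (⟨F, hF⟩ : Hs α₁ α₂ V) = inner ℝ (w k : K4) F := rfl
    rw [e3, e4] at e2
    have e5 := (hμ k).ne'
    have e6 : inner ℝ (w k : K4) F = (μ k)⁻¹ * ∫ p in Omega, u k p * v p := by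
      rw [e2, inv_mul_cancel_left₀ e5]
    linarith
  · intro k
    symm
    unfold lamk
    apply IsLeast.csInf_eq
    constructor
    · refine ⟨fun i => u i, fun i => gx i, fun i => gy i, fun i => hmem i, ?_, ?_⟩
      · intro c hc
        have hr := l2_coe_sum c (fun i => (w i : K4) 0) (fun i => u i) (fun i => (hrep i).1)
        have hz : Jm α₁ α₂ V (∑ i : Fin (k + 1), c i • w i) = 0 := by
          simp only [map_sum, map_smul, Jm_apply]
          rw [Lp.eq_zero_iff_ae_eq_zero]
          filter_upwards [hr, hc] with p a b
          rw [a, b]; rfl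
        have := (abs_minmax' (Jm α₁ α₂ V) μ w hμ hanti hon heig k c).1
        rw [hz, norm_zero, zero_pow two_ne_zero] at this
        funext i
        have hi := (Finset.sum_eq_zero_iff_of_nonneg (fun i _ => sq_nonneg (c i))).1 this.symm i (Finset.mem_univ i)
        simpa using hi
      · rw [ray_eq hVn (fun i : Fin (k + 1) => w i) _ _ _ (fun i => hrep i)]
        symm
        apply IsGreatest.csSup_eq
        constructor
        · refine ⟨Pi.single (Fin.last k) 1, ?_⟩
          have e : ∑ i : Fin (k + 1), (Pi.single (Fin.last k) 1 : Fin (k + 1) → ℝ) i • w i = w k := by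
            rw [Finset.sum_eq_single (Fin.last k)]
            · simp
            · intro b _ hb; simp [Pi.single_eq_of_ne hb]
            · simp
          rw [e]
          have e1 : ‖Jm α₁ α₂ V (w k)‖ ^ 2 = 1 := by
            rw [← real_inner_self_eq_norm_sq, hon]; simp
          have e2 := heig k (w k)
          rw [hon, if_pos rfl, real_inner_self_eq_norm_sq] at e2
          refine ⟨(pow_eq_one_iff_of_nonneg (norm_nonneg _) two_ne_zero).1 e1, ?_⟩
          rw [eq_inv_of_mul_eq_one_right e2.symm]
        · rintro s ⟨c, hc, rfl⟩
          obtain ⟨a1, a2⟩ := abs_minmax' (Jm α₁ α₂ V) μ w hμ hanti hon heig k c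
          rw [hc, one_pow] at a1
          rw [← a1, mul_one] at a2
          linarith
    · rintro r ⟨φ, φx, φy, hφ, hli, rfl⟩
      choose Φ hΦ hΦr using fun i => mem_of_MemH0 h1 h2 hVi.1 hVn (hφ i)
      rw [ray_eq hVn (fun i => ⟨Φ i, hΦ i⟩) _ _ _ hΦr]
      obtain ⟨⟨c, c1, c2⟩, C, hC⟩ := abs_minmax (Jm α₁ α₂ V) μ w hμ hbd k (fun i => ⟨Φ i, hΦ i⟩) (by
        intro c hz
        apply hli
        have hr := l2_coe_sum c (fun i => Φ i 0) φ (fun i => (hΦr i).1)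
        simp only [map_sum, map_smul, Jm_apply] at hz
        rw [Lp.eq_zero_iff_ae_eq_zero] at hz
        filter_upwards [hr, hz] with p a b
        rw [← a, b]; rfl)
      refine le_csSup_of_le ⟨C - 1, ?_⟩ ⟨c, c1, rfl⟩ (by linarith)
      rintro s ⟨c, hc, rfl⟩
      linarith [hC c hc]
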